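/- Let P ∈ ℝ[x] be a polynomial whose coefficient of x is non-Liouville. Then there exist constants C > 0 and X₁ > 0 such that for all real X ≥ X₁, |S(X) − X/ζ(2)| ≤ C·X/(log log X)^{1/3}, where ζ(2) = π²/6. -/

import Mathlib

open Real Finset

/-- `α` is Liouville: for every `n ∈ ℕ` there are integers `p, q` with `q > 1`
and `|α - p/q| ≤ q^(-n)`. -/
def IsLiouvilleReal (α : ℝ) : Prop :=
  ∀ n : ℕ, ∃ p q : ℤ, 1 < q ∧ |α - (p : ℝ) / (q : ℝ)| ≤ (q : ℝ) ^ (-(n : ℤ))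

open Classical in
/-- The finset of primes `p < z`. -/
noncomputable def primesLt (z : ℝ) : Finset ℕ :=
  (Finset.range ⌈z⌉₊).filter fun p => p.Prime ∧ (p : ℝ) < z

/-- `P_z`, the product of all primes `p < z`. -/
noncomputable def Pz (z : ℝ) : ℕ := ∏ p ∈ primesLt z, p

open Classical in
/-- `S(X)`: the number of naturals `1 ≤ x ≤ X` with `gcd(x, ⌊P(x)⌋) = 1`. -/
noncomputable def S (P : Polynomial ℝ) (X : ℝ) : ℕ :=
  ((Finset.Icc 1 ⌊X⌋₊).filter fun x => Int.gcd (x : ℤ) ⌊P.eval (x : ℝ)⌋ = 1).card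

open Classical in
/-- `A_d(X)`: the set of naturals `1 ≤ x ≤ X` with `d ∣ x` and `d ∣ ⌊P(x)⌋`. -/
noncomputable def AP (P : Polynomial ℝ) (d : ℕ) (X : ℝ) : Finset ℕ :=
  (Finset.Icc 1 ⌊X⌋₊).filter fun x => (d : ℤ) ∣ (x : ℤ) ∧ (d : ℤ) ∣ ⌊P.eval (x : ℝ)⌋

open Classical in
/-- `S(X, z)`: the number of naturals `1 ≤ x ≤ X` with `gcd(gcd(x, ⌊P(x)⌋), P_z) = 1`. -/
noncomputable def S2 (P : Polynomial ℝ) (X z : ℝ) : ℕ :=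
  ((Finset.Icc 1 ⌊X⌋₊).filter fun x =>
    Nat.gcd (Int.gcd (x : ℤ) ⌊P.eval (x : ℝ)⌋) (Pz z) = 1).card

/-- `z = X ^ (c / log log X)` with `c = 1/(2(A+1))`. -/
noncomputable def zf (A X : ℝ) : ℝ := X ^ ((1 / (2 * (A + 1))) / Real.log (Real.log X))

noncomputable def ee (x : ℝ) : ℂ := Complex.exp (Complex.I * ((2 * π * x : ℝ) : ℂ))

noncomputable def nrm (x : ℝ) : ℝ := |x - round x|

lemma nrm_nonneg (x : ℝ) : 0 ≤ nrm x := abs_nonneg _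

lemma nrm_le_half (x : ℝ) : nrm x ≤ 1 / 2 := abs_sub_round x

lemma nrm_le (x : ℝ) (p : ℤ) : nrm x ≤ |x - p| := round_le x p

lemma nrm_sub_le (x y : ℝ) : nrm (x - y) ≤ nrm x + nrm y := by
  have h := nrm_le (x - y) (round x - round y)
  refine h.trans ?_
  unfold nrm
  have : x - y - ((round x - round y : ℤ) : ℝ) = (x - round x) - (y - round y) := by
    push_cast; ring
  rw [this]
  exact abs_sub _ _

lemma nrm_mul_le (n : ℕ) (x : ℝ) : nrm (n * x) ≤ n * nrm x := by
  have h := nrm_le (n * x) (n * round x)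
  refine h.trans ?_
  unfold nrm
  have : (n : ℝ) * x - ((n * round x : ℤ) : ℝ) = n * (x - round x) := by
    push_cast; ring
  rw [this, abs_mul, Nat.abs_cast]

lemma nrm_add_int (x : ℝ) (p : ℤ) : nrm (x + p) = nrm x := by
  unfold nrm
  rw [round_add_intCast]; push_cast; ring_nf

lemma nrm_eq_abs {x : ℝ} (h : |x| ≤ 1 / 2) : nrm x = |x| := by
  apply le_antisymm
  · simpa using nrm_le x 0
  · unfold nrm
    by_cases h0 : round x = 0
    · simp [h0]
    · have h1 : (1 : ℝ) ≤ |(round x : ℝ)| := by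
        exact_mod_cast Int.one_le_abs h0
      have := abs_sub_abs_le_abs_sub (round x : ℝ) x
      rw [abs_sub_comm x]
      linarith

lemma nrm_ge {x η : ℝ} (h1 : η ≤ |x|) (h2 : |x| ≤ 1 - η) : η ≤ nrm x := by
  unfold nrm
  by_cases h0 : round x = 0
  · simpa [h0] using h1
  · have h1 : (1 : ℝ) ≤ |(round x : ℝ)| := by
      exact_mod_cast Int.one_le_abs h0
    have := abs_sub_abs_le_abs_sub (round x : ℝ) x
    rw [abs_sub_comm x]
    linarith

lemma ee_add (x y : ℝ) : ee (x + y) = ee x * ee y := by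
  unfold ee; rw [← Complex.exp_add]; push_cast; ring_nf

lemma ee_zero : ee 0 = 1 := by simp [ee]

lemma norm_ee (x : ℝ) : ‖ee x‖ = 1 := by
  unfold ee; rw [mul_comm]; exact Complex.norm_exp_ofReal_mul_I _

lemma ee_int (p : ℤ) : ee p = 1 := by
  unfold ee
  rw [Complex.exp_eq_one_iff]
  exact ⟨p, by push_cast; ring⟩

lemma ee_nat (p : ℕ) : ee p = 1 := by
  have := ee_int p
  simpa using this

lemma ee_add_int (x : ℝ) (p : ℤ) : ee (x + p) = ee x := by rw [ee_add, ee_int, mul_one]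

lemma ee_conj (x : ℝ) : (starRingEnd ℂ) (ee x) = ee (-x) := by
  unfold ee; rw [← Complex.exp_conj, map_mul, Complex.conj_I, Complex.conj_ofReal]; push_cast; ring_nf

lemma ee_nat_mul (n : ℕ) (x : ℝ) : ee (n * x) = ee x ^ n := by
  unfold ee; rw [← Complex.exp_nat_mul]; push_cast; ring_nf

lemma norm_ee_sub_one_le (x : ℝ) : ‖ee x - 1‖ ≤ 2 * π * |x| := by
  unfold ee
  refine (Real.norm_exp_I_mul_ofReal_sub_one_le).trans ?_
  rw [Real.norm_eq_abs, abs_mul, abs_of_pos (by positivity)]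

lemma norm_ee_sub_le (x y : ℝ) : ‖ee x - ee y‖ ≤ 2 * π * |x - y| := by
  have : ee x - ee y = ee y * (ee (x - y) - 1) := by
    rw [mul_sub, ← ee_add]; ring_nf
  rw [this, norm_mul, norm_ee, one_mul]
  exact norm_ee_sub_one_le _

lemma norm_ee_sub_one_ge (x : ℝ) : 4 * nrm x ≤ ‖ee x - 1‖ := by
  have h1 : ee x = ee (x - round x) := by
    have := ee_add_int (x - round x) (round x)
    rw [← this]; ring_nf
  rw [h1]
  have h2 : |x - round x| ≤ 1 / 2 := abs_sub_round x
  unfold nrm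
  set t := x - round x
  unfold ee
  rw [Complex.norm_exp_I_mul_ofReal_sub_one, Real.norm_eq_abs, abs_mul, abs_two]
  have h3 := Real.mul_abs_le_abs_sin (x := 2 * π * t / 2) (by
    rw [show 2 * π * t / 2 = π * t by ring, abs_mul, abs_of_pos Real.pi_pos]
    nlinarith [Real.pi_pos])
  have h4 : 2 / π * |2 * π * t / 2| = 2 * |t| := by
    rw [show 2 * π * t / 2 = π * t by ring, abs_mul, abs_of_pos Real.pi_pos]
    field_simp
  linarith

lemma geom_bound (β : ℝ) (c : ℝ) (N : ℕ) :
    2 * nrm β * ‖∑ y ∈ range N, ee (c + y * β)‖ ≤ 1 := by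
  have h1 : ∑ y ∈ range N, ee (c + y * β) = ee c * ∑ y ∈ range N, ee β ^ y := by
    rw [mul_sum]; refine sum_congr rfl fun y _ => ?_
    rw [ee_add, ee_nat_mul]
  rw [h1, norm_mul, norm_ee, one_mul]
  have h2 := geom_sum_mul (ee β) N
  have h3 : ‖∑ y ∈ range N, ee β ^ y‖ * ‖ee β - 1‖ ≤ 2 := by
    rw [← norm_mul, h2]
    refine (norm_sub_le _ _).trans ?_
    rw [norm_pow, norm_ee]; norm_num
  have h4 := norm_ee_sub_one_ge β
  nlinarith [norm_nonneg (∑ y ∈ range N, ee β ^ y)]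

lemma fiber_spread (N q W n : ℕ) (T : Finset ℕ) (hT : T ⊆ range N) (hq : 1 ≤ q)
    (hn : q * (N / W + 1) * n < T.card) :
    ∃ h1 ∈ T, ∃ h2 ∈ T, ∃ m : ℕ, n ≤ m ∧ h2 = h1 + q * m ∧ h2 / W = h1 / W := by
  classical
  obtain ⟨⟨r, w⟩, -, hlt⟩ := exists_lt_card_fiber_of_mul_lt_card_of_maps_to
    (s := T) (t := range q ×ˢ range (N / W + 1)) (f := fun h => (h % q, h / W)) (n := n)
    (by
      intro h hh
      have h1 := mem_range.1 (hT hh)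
      simp only [mem_product, mem_range]
      exact ⟨Nat.mod_lt _ hq, Nat.lt_succ_of_le (Nat.div_le_div_right h1.le)⟩)
    (by simpa [card_product] using hn)
  set F := T.filter fun h => (h % q, h / W) = (r, w) with hF
  have hne : F.Nonempty := card_pos.1 (by omega)
  have hmem : ∀ x ∈ F, x ∈ T ∧ x % q = r ∧ x / W = w := by
    intro x hx
    rw [hF, mem_filter, Prod.mk.injEq] at hx
    exact hx
  have hmin := hmem _ (F.min'_mem hne)
  have hmax := hmem _ (F.max'_mem hne)
  set a := F.min' hne
  set b := F.max' hne
  have hcard : F.card ≤ (Icc (a / q) (b / q)).card := by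
    apply card_le_card_of_injOn (fun h => h / q)
    · intro x hx
      simp only [coe_Icc, Set.mem_Icc]
      exact ⟨Nat.div_le_div_right (F.min'_le x hx), Nat.div_le_div_right (F.le_max' x hx)⟩
    · intro x hx y hy hxy
      have h1 := (hmem x hx).2.1
      have h2 := (hmem y hy).2.1
      simp only at hxy
      rw [← Nat.div_add_mod x q, ← Nat.div_add_mod y q, h1, h2, hxy]
  rw [Nat.card_Icc] at hcard
  have hab : a / q ≤ b / q := Nat.div_le_div_right (F.min'_le b (F.max'_mem hne))
  refine ⟨a, hmin.1, b, hmax.1, b / q - a / q, by omega, ?_, by rw [hmin.2.2, hmax.2.2]⟩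
  have h1 := Nat.div_add_mod a q
  have h2 := Nat.div_add_mod b q
  rw [hmin.2.1] at h1
  rw [hmax.2.1] at h2
  rw [Nat.mul_sub]
  have := Nat.mul_le_mul_left q hab
  omega

lemma fiber_spread' (K : ℝ) (N q W : ℕ) (T : Finset ℕ) (hT : T ⊆ range N) (hq : 1 ≤ q)
    (hK : 2 ≤ K) (hWN : W ≤ N) (hW : 4 * K * q ≤ W) (hTc : (N : ℝ) ≤ K * T.card) :
    ∃ h1 ∈ T, ∃ h2 ∈ T, ∃ m : ℕ, (W : ℝ) ≤ 4 * K * (q * m) ∧ q * m ≤ W ∧ h2 = h1 + q * m := by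
  have hq' : (1 : ℝ) ≤ q := by exact_mod_cast hq
  have hW0 : (0 : ℝ) < W := by nlinarith
  have hW0' : 0 < W := by exact_mod_cast hW0
  have hN0 : (0 : ℝ) < N := lt_of_lt_of_le hW0 (by exact_mod_cast hWN)
  have hKq : 0 < 2 * K * q := by positivity
  obtain ⟨n, hn⟩ : ∃ n : ℕ, ⌈(W : ℝ) / (2 * K * q)⌉₊ = n + 1 := by
    apply Nat.exists_eq_succ_of_ne_zero
    have : 0 < ⌈(W : ℝ) / (2 * K * q)⌉₊ := Nat.ceil_pos.2 (by positivity)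
    omega
  have h1 : (W : ℝ) / (2 * K * q) ≤ n + 1 := by
    have := Nat.le_ceil ((W : ℝ) / (2 * K * q))
    rw [hn] at this; push_cast at this; exact this
  have h2 : (n : ℝ) < W / (2 * K * q) := by
    have := Nat.ceil_lt_add_one (a := (W : ℝ) / (2 * K * q)) (by positivity)
    rw [hn] at this; push_cast at this; linarith
  rw [div_le_iff₀ hKq] at h1
  rw [lt_div_iff₀ hKq] at h2
  have hdiv : ((N / W : ℕ) : ℝ) + 1 ≤ 2 * N / W := by
    have h3 : ((N / W : ℕ) : ℝ) ≤ (N : ℝ) / W := Nat.cast_div_le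
    have h4 : (1 : ℝ) ≤ N / W := by
      rw [le_div_iff₀ hW0]; simpa using (by exact_mod_cast hWN : (W : ℝ) ≤ N)
    calc _ ≤ (N : ℝ) / W + N / W := by linarith
      _ = _ := by ring
  have hcnt : q * (N / W + 1) * n < T.card := by
    have : ((q * (N / W + 1) * n : ℕ) : ℝ) < T.card := by
      push_cast
      have h5 : (q : ℝ) * (((N / W : ℕ) : ℝ) + 1) * n ≤ q * (2 * N / W) * n := by gcongr
      have h6 : K * (q * (2 * N / W) * n) < N := by
        have : K * (q * (2 * N / W) * n) = (n * (2 * K * q)) * (N / W) := by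
          field_simp
        rw [this]
        calc _ < W * ((N : ℝ) / W) := by
              apply mul_lt_mul_of_pos_right h2 (by positivity)
          _ = N := by field_simp
      have h7 : K * ((q : ℝ) * (((N / W : ℕ) : ℝ) + 1) * n) < K * T.card := by
        calc _ ≤ K * (q * (2 * N / W) * n) := by gcongr
          _ < N := h6
          _ ≤ _ := hTc
      exact lt_of_mul_lt_mul_left h7 (by linarith)
    exact_mod_cast this
  obtain ⟨a, ha, b, hb, m, hm, hab, hw⟩ := fiber_spread N q W n T hT hq hcnt
  refine ⟨a, ha, b, hb, m, ?_, ?_, hab⟩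
  · have : (n : ℝ) ≤ m := by exact_mod_cast hm
    have h8 : (2 * K * q) * (n : ℝ) ≤ (2 * K * q) * m := by gcongr
    nlinarith
  · have h1 := Nat.div_add_mod a W
    have h2 := Nat.div_add_mod b W
    rw [hw] at h2
    have := Nat.mod_lt b hW0'
    omega

lemma recur (K ε β : ℝ) (N : ℕ) (T : Finset ℕ) (hT : T ⊆ range N) (hK : 2 ≤ K)
    (hε : 0 < ε) (h32 : 32 * K * ε < 1) (hN : 12 * K ^ 2 ≤ N) (hTc : (N : ℝ) ≤ K * T.card)
    (hh : ∀ h ∈ T, nrm (h * β) ≤ ε) :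
    ∃ q : ℕ, 1 ≤ q ∧ (q : ℝ) ≤ 3 * K ∧ nrm (q * β) ≤ 24 * K ^ 2 * ε / N := by
  have hN0 : (0 : ℝ) < N := by nlinarith
  -- first step
  obtain ⟨q, hq1, hq2, hq3⟩ : ∃ q : ℕ, 1 ≤ q ∧ (q : ℝ) ≤ 3 * K ∧ nrm (q * β) ≤ 2 * ε := by
    set w := ⌈2 * K⌉₊ with hw
    have hw1 : 2 * K ≤ w := Nat.le_ceil _
    have hw2 : (w : ℝ) < 2 * K + 1 := Nat.ceil_lt_add_one (by linarith)
    have hw0 : (0 : ℝ) < w := by linarith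
    have hw0' : 0 < w := by exact_mod_cast hw0
    have hc : (range (N / w + 1)).card < T.card := by
      rw [card_range]
      have : ((N / w + 1 : ℕ) : ℝ) < T.card := by
        push_cast
        have h3 : ((N / w : ℕ) : ℝ) ≤ (N : ℝ) / w := Nat.cast_div_le
        have h4 : (N : ℝ) / w ≤ N / (2 * K) := by gcongr
        have h5 : K * (N / (2 * K) + 1) < K * T.card := by
          have : K * (N / (2 * K) + 1) = N / 2 + K := by field_simp
          rw [this]; nlinarith
        have := lt_of_mul_lt_mul_left h5 (by linarith)
        linarith
      exact_mod_cast this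
    obtain ⟨x, hx, y, hy, hne, hxy⟩ := exists_ne_map_eq_of_card_lt_of_maps_to hc
      (f := fun h => h / w) (by
        intro h hh
        have h1 := mem_range.1 (hT hh)
        simp only [coe_range, Set.mem_Iio]
        exact Nat.lt_succ_of_le (Nat.div_le_div_right h1.le))
    wlog hlt : x < y generalizing x y
    · exact this y hy x hx hne.symm hxy.symm (by omega)
    replace hxy : x / w = y / w := hxy
    have h1 := Nat.div_add_mod x w
    have h2 := Nat.div_add_mod y w
    have h3 := Nat.mod_lt y hw0'
    rw [hxy] at h1
    refine ⟨y - x, by omega, ?_, ?_⟩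
    · have : y - x ≤ w := by omega
      have : ((y - x : ℕ) : ℝ) ≤ w := by exact_mod_cast this
      linarith
    · rw [Nat.cast_sub hlt.le, sub_mul]
      have := nrm_sub_le (y * β) (x * β)
      linarith [hh x hx, hh y hy]
  refine ⟨q, hq1, hq2, ?_⟩
  have hq' : (1 : ℝ) ≤ q := by exact_mod_cast hq1
  set s := (q : ℝ) * β - round (q * β) with hs
  have hns : nrm (q * β) = |s| := rfl
  rw [hns] at hq3 ⊢
  by_cases hs0 : s = 0
  · rw [hs0, abs_zero]; positivity
  have hs1 : 0 < |s| := abs_pos.2 hs0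
  -- key
  have key : ∀ W : ℕ, W ≤ N → 4 * K * q ≤ W → 2 * |s| * W ≤ q → |s| * W ≤ 8 * K * q * ε := by
    intro W hWN hW hsW
    obtain ⟨a, ha, b, hb, m, hm1, hm2, hab⟩ := fiber_spread' K N q W T hT hq1 hK hWN hW hTc
    have h1 : nrm (m * s) ≤ 2 * ε := by
      have h2 := nrm_sub_le (b * β) (a * β)
      have h3 : (b : ℝ) * β - a * β = m * s + ((m * round (q * β) : ℤ) : ℝ) := by
        rw [hab, hs]; push_cast; ring
      rw [h3, nrm_add_int] at h2
      linarith [hh a ha, hh b hb]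
    have hm2' : (q : ℝ) * m ≤ W := by exact_mod_cast hm2
    have h4 : |(m : ℝ) * s| ≤ 1 / 2 := by
      rw [abs_mul, Nat.abs_cast]
      have : (q : ℝ) * (m * |s|) ≤ q * (1 / 2) := by nlinarith
      exact le_of_mul_le_mul_left this (by linarith)
    rw [nrm_eq_abs h4, abs_mul, Nat.abs_cast] at h1
    calc |s| * W ≤ |s| * (4 * K * (q * m)) := by gcongr
      _ = 4 * K * q * (m * |s|) := by ring
      _ ≤ 4 * K * q * (2 * ε) := by gcongr
      _ = _ := by ring
  by_cases hcase : 2 * |s| * N ≤ q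
  · have := key N le_rfl (by nlinarith) hcase
    rw [le_div_iff₀ hN0]
    calc |s| * N ≤ 8 * K * q * ε := this
      _ ≤ 8 * K * (3 * K) * ε := by gcongr
      _ = _ := by ring
  · exfalso
    push Not at hcase
    set W := ⌊(q : ℝ) / (2 * |s|)⌋₊ with hWdef
    have hW1 : (W : ℝ) ≤ q / (2 * |s|) := Nat.floor_le (by positivity)
    have hW2 : (q : ℝ) / (2 * |s|) < W + 1 := Nat.lt_floor_add_one _
    rw [le_div_iff₀ (by positivity)] at hW1
    rw [div_lt_iff₀ (by positivity)] at hW2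
    have hWN : W ≤ N := by
      have : (W : ℝ) ≤ N := by
        have : (W : ℝ) * (2 * |s|) ≤ N * (2 * |s|) := by linarith
        exact le_of_mul_le_mul_right this (by positivity)
      exact_mod_cast this
    have h8 : 32 * K * |s| < 2 := by nlinarith
    have hWq : 8 * K * q < W + 1 := by
      have : 8 * K * q * (2 * |s|) < (W + 1) * (2 * |s|) := by nlinarith
      exact lt_of_mul_lt_mul_right this (by positivity)
    have hW4 : 4 * K * q ≤ W := by nlinarith
    have hW1' : (1 : ℝ) ≤ W := by nlinarith
    have := key W hWN hW4 (by linarith)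
    have h9 : (q : ℝ) < 4 * (|s| * W) := by nlinarith
    nlinarith

def DD : ℕ → (ℕ → ℝ) → ℝ → Prop
  | 0, f, β => ∀ y, f y = β
  | k + 1, f, β => DD k (fun y => f (y + 1) - f y) β

lemma DD_add (k : ℕ) : ∀ {f g : ℕ → ℝ} {β γ : ℝ}, DD k f β → DD k g γ →
    DD k (fun y => f y + g y) (β + γ) := by
  induction k with
  | zero => intro f g β γ hf hg y; simp only [hf y, hg y]
  | succ k ih =>
    intro f g β γ hf hg
    have := ih hf hg
    unfold DD
    convert this using 2
    ring

lemma DD_smul (k : ℕ) (c : ℝ) : ∀ {f : ℕ → ℝ} {β : ℝ}, DD k f β →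
    DD k (fun y => c * f y) (c * β) := by
  induction k with
  | zero => intro f β hf y; simp only [hf y]
  | succ k ih =>
    intro f β hf
    have := ih hf
    unfold DD
    convert this using 2
    ring

lemma DD_shift (k h : ℕ) : ∀ {f : ℕ → ℝ} {β : ℝ}, DD k f β →
    DD k (fun y => f (y + h)) β := by
  induction k with
  | zero => intro f β hf y; exact hf _
  | succ k ih =>
    intro f β hf
    have := ih hf
    unfold DD
    convert this using 4
    ring

lemma DD_zero (k : ℕ) : DD k (fun _ => 0) 0 := by
  induction k with
  | zero => intro y; rfl
  | succ k ih => unfold DD; simpa using ih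

lemma DD_diff (k h : ℕ) {f : ℕ → ℝ} {β : ℝ} (hf : DD (k + 1) f β) :
    DD k (fun y => f (y + h) - f y) (h * β) := by
  induction h with
  | zero => simpa using DD_zero k
  | succ h ih =>
    have h1 : DD k (fun y => f (y + 1) - f y) β := hf
    have := DD_add k (DD_shift k h h1) ih
    convert this using 2
    · rw [show _ + (h + 1) = _ + h + 1 by ring]; ring
    · push_cast; ring

lemma DD_of_fwdDiff (k : ℕ) (β : ℝ) : ∀ (g : ℝ → ℝ), (∀ x, (fwdDiff (1 : ℝ))^[k] g x = β) →
    DD k (fun y => g y) β := by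
  induction k with
  | zero => intro g hg y; exact hg y
  | succ k ih =>
    intro g hg
    have := ih (fwdDiff 1 g) (by intro x; simpa [Function.iterate_succ] using hg x)
    unfold DD
    convert this using 2
    simp [fwdDiff]

lemma DD_poly (k : ℕ) (b : ℕ → ℝ) :
    DD k (fun y : ℕ => ∑ j ∈ range (k + 1), b j * (y : ℝ) ^ j) (b k * (k.factorial : ℝ)) := by
  have h1 : ∀ m ≤ k, DD k (fun y : ℕ => ∑ j ∈ range m, b j * (y : ℝ) ^ j) 0 := by
    intro m
    induction m with
    | zero => intro _; simpa using DD_zero k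
    | succ m ih =>
      intro hm
      have h2 := ih (by omega)
      have h3 : DD k (fun y : ℕ => (y : ℝ) ^ m) 0 :=
        DD_of_fwdDiff k 0 (fun x => x ^ m) (by
          intro x; rw [fwdDiff_iter_pow_eq_zero_of_lt (by omega : m < k)]; rfl)
      have := DD_add k h2 (DD_smul k (b m) h3)
      simp only [mul_zero, add_zero] at this
      convert this using 2
      rw [sum_range_succ]
  have h4 : DD k (fun y : ℕ => (y : ℝ) ^ k) k.factorial :=
    DD_of_fwdDiff k _ (fun x => x ^ k) (by
      intro x; rw [fwdDiff_iter_eq_factorial]; simp)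
  have := DD_add k (h1 k le_rfl) (DD_smul k (b k) h4)
  simp only [zero_add] at this
  convert this using 2
  rw [sum_range_succ]

lemma weyl_id (f : ℕ → ℝ) (N : ℕ) :
    ‖∑ y ∈ range N, ee (f y)‖ ^ 2 =
      N + 2 * (∑ h ∈ Ico 1 N, ∑ y ∈ range (N - h), ee (f (y + h) - f y)).re := by
  induction N with
  | zero => simp
  | succ n ih =>
    have h1 : ∑ h ∈ Ico 1 (n + 1), ∑ y ∈ range (n + 1 - h), ee (f (y + h) - f y) =
        ∑ h ∈ Ico 1 n, ∑ y ∈ range (n - h), ee (f (y + h) - f y)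
          + ∑ y ∈ range n, ee (f n - f y) := by
      have h2 : ∑ h ∈ Ico 1 (n + 1), ∑ y ∈ range (n + 1 - h), ee (f (y + h) - f y) =
          ∑ h ∈ Ico 1 (n + 1), (∑ y ∈ range (n - h), ee (f (y + h) - f y)
            + ee (f n - f (n - h))) := by
        refine sum_congr rfl fun h hh => ?_
        rw [mem_Ico] at hh
        rw [show n + 1 - h = (n - h) + 1 by omega, sum_range_succ,
          show n - h + h = n by omega]
      rw [h2, sum_add_distrib]
      congr 1
      · cases n with
        | zero => simp
        | succ m => rw [sum_Ico_succ_top (by omega)]; simp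
      · rw [sum_Ico_eq_sum_range, Nat.add_sub_cancel, ← sum_range_reflect]
        refine sum_congr rfl fun y hy => ?_
        rw [mem_range] at hy
        rw [show n - (1 + (n - 1 - y)) = y by omega]
    rw [h1, sum_range_succ]
    have h3 : ∑ y ∈ range n, ee (f n - f y) =
        ee (f n) * (starRingEnd ℂ) (∑ y ∈ range n, ee (f y)) := by
      rw [map_sum, mul_sum]
      refine sum_congr rfl fun y _ => ?_
      rw [ee_conj, ← ee_add]; rfl
    rw [h3]
    have h4 : ‖ee (f n)‖ ^ 2 = 1 := by rw [norm_ee]; norm_num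
    rw [← Complex.normSq_eq_norm_sq] at ih h4 ⊢
    rw [Complex.normSq_add, ih, h4]
    simp only [Complex.add_re, Complex.mul_re, Complex.conj_re, Complex.conj_im]
    push_cast
    ring

/-- Weyl differencing -/
lemma weyl (f : ℕ → ℝ) (N : ℕ) :
    ‖∑ y ∈ range N, ee (f y)‖ ^ 2 ≤
      N + 2 * ∑ h ∈ Ico 1 N, ‖∑ y ∈ range (N - h), ee (f (y + h) - f y)‖ := by
  rw [weyl_id]
  have := (Complex.re_le_norm _).trans
    (norm_sum_le (Ico 1 N) fun h => ∑ y ∈ range (N - h), ee (f (y + h) - f y))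
  linarith

lemma norm_sum_ee_le (f : ℕ → ℝ) (N : ℕ) : ‖∑ y ∈ range N, ee (f y)‖ ≤ N := by
  refine (norm_sum_le _ _).trans ?_
  simp [norm_ee]

lemma many_h (f : ℕ → ℝ) (N : ℕ) (K : ℝ) (hK : 2 ≤ K) (hN : 4 * K ^ 2 ≤ N)
    (hS : N / K ≤ ‖∑ y ∈ range N, ee (f y)‖) :
    (N : ℝ) ≤ 4 * K ^ 2 * ((Ico 1 N).filter fun h =>
      N / (8 * K ^ 2) ≤ ‖∑ y ∈ range (N - h), ee (f (y + h) - f y)‖).card := by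
  set T := (Ico 1 N).filter fun h =>
      N / (8 * K ^ 2) ≤ ‖∑ y ∈ range (N - h), ee (f (y + h) - f y)‖ with hT
  have hN0 : (0 : ℝ) < N := by nlinarith
  have h1 := weyl f N
  have h2 : ∑ h ∈ Ico 1 N, ‖∑ y ∈ range (N - h), ee (f (y + h) - f y)‖
      ≤ T.card * N + N * (N / (8 * K ^ 2)) := by
    rw [← sum_filter_add_sum_filter_not (Ico 1 N) (fun h =>
      N / (8 * K ^ 2) ≤ ‖∑ y ∈ range (N - h), ee (f (y + h) - f y)‖)]
    apply add_le_add
    · rw [← nsmul_eq_mul]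
      apply sum_le_card_nsmul
      intro h _
      refine (norm_sum_ee_le (fun y => f (y + h) - f y) _).trans ?_
      exact_mod_cast Nat.sub_le N h
    · refine (sum_le_card_nsmul _ _ (N / (8 * K ^ 2)) ?_).trans ?_
      · intro h hh
        rw [mem_filter] at hh
        exact (not_le.1 hh.2).le
      · rw [nsmul_eq_mul]
        gcongr
        refine (card_filter_le _ _).trans ?_
        simp
  have h3 : (N / K) ^ 2 ≤ ‖∑ y ∈ range N, ee (f y)‖ ^ 2 := by gcongr
  have h4 : (N : ℝ) ^ 2 ≤ K ^ 2 * (N + 2 * (T.card * N + N * (N / (8 * K ^ 2)))) := by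
    have : (N : ℝ) ^ 2 = K ^ 2 * (N / K) ^ 2 := by field_simp
    rw [this]
    gcongr
    linarith
  have h5 : K ^ 2 * (N + 2 * (T.card * N + N * (N / (8 * K ^ 2)))) =
      N * (K ^ 2 + 2 * K ^ 2 * T.card + N / 4) := by field_simp; ring
  rw [h5, pow_two (N : ℝ)] at h4
  have h6 := le_of_mul_le_mul_left h4 hN0
  nlinarith

lemma trivial_q (β : ℝ) (K : ℝ) (hK : 2 ≤ K) (C : ℕ) (x : ℝ) (hx : 0 < x) (h : x ≤ K ^ C) :
    ∃ q : ℕ, 1 ≤ q ∧ (q : ℝ) ≤ K ^ C ∧ nrm (q * β) ≤ K ^ C / x := by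
  refine ⟨1, le_rfl, ?_, ?_⟩
  · simpa using one_le_pow₀ (by linarith : 1 ≤ K)
  · refine (nrm_le_half _).trans ?_
    rw [le_div_iff₀ hx]; linarith

theorem leadThm (k : ℕ) : ∃ C : ℕ, ∀ K : ℝ, 2 ≤ K → ∀ (f : ℕ → ℝ) (β : ℝ), DD (k + 1) f β →
    ∀ N : ℕ, 1 ≤ N → N / K ≤ ‖∑ y ∈ range N, ee (f y)‖ →
    ∃ q : ℕ, 1 ≤ q ∧ (q : ℝ) ≤ K ^ C ∧ nrm (q * β) ≤ K ^ C / (N : ℝ) ^ (k + 1) := by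
  induction k with
  | zero =>
    refine ⟨1, fun K hK f β hf N hN hS => ⟨1, le_rfl, by simp; linarith, ?_⟩⟩
    have hf' : ∀ y : ℕ, f y = f 0 + y * β := by
      intro y
      induction y with
      | zero => simp
      | succ y ih =>
        have := hf y
        simp only at this
        push_cast; linarith
    have h1 := geom_bound β (f 0) N
    have h2 : ∑ y ∈ range N, ee (f y) = ∑ y ∈ range N, ee (f 0 + y * β) :=
      sum_congr rfl fun y _ => by rw [hf']
    rw [← h2] at h1
    have hN0 : (0 : ℝ) < N := by exact_mod_cast hN
    have hK0 : 0 < K := by linarith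
    rw [div_le_iff₀ hK0] at hS
    simp only [zero_add, pow_one, Nat.cast_one, one_mul]
    rw [le_div_iff₀ hN0]
    nlinarith [nrm_nonneg β]
  | succ k ih =>
    obtain ⟨C, hC⟩ := ih
    -- exponents
    refine ⟨5 * ((2 * C + k + 4) * 2 + (2 * C + 3) * (k + 2) + 3 * C + 10), fun K hK f β hf N hN hS => ?_⟩
    set E := 5 * ((2 * C + k + 4) * 2 + (2 * C + 3) * (k + 2) + 3 * C + 10) with hE
    have hK1 : 1 ≤ K := by linarith
    have hN0 : (0 : ℝ) < N := by exact_mod_cast hN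
    have hN1 : (1 : ℝ) ≤ N := by exact_mod_cast hN
    set J := K ^ 5 with hJ
    have hJ8 : 8 * K ^ 2 ≤ J := by
      have : (2 : ℝ) ^ 3 ≤ K ^ 3 := by gcongr
      rw [hJ, show K ^ 5 = K ^ 3 * K ^ 2 by ring]
      gcongr; linarith
    have hJ32 : 32 ≤ J := by
      have : (2 : ℝ) ^ 5 ≤ K ^ 5 := by gcongr
      linarith
    have hJ1 : 1 ≤ J := by linarith
    have hKE : ∀ m : ℕ, m ≤ (2 * C + k + 4) * 2 + (2 * C + 3) * (k + 2) + 3 * C + 10 → J ^ m ≤ K ^ E := by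
      intro m hm
      rw [hJ, ← pow_mul]
      exact pow_le_pow_right₀ hK1 (by omega)
    set K2 := J ^ (C + 1) with hK2
    set ε := J ^ (C + k + 1) / (N : ℝ) ^ (k + 1) with hε
    have hε0 : 0 < ε := by positivity
    have hpow : (N : ℝ) ≤ (N : ℝ) ^ (k + 1) := le_self_pow₀ hN1 (by omega)
    have hpow2 : (N : ℝ) ^ (k + 1 + 1) ≤ ((N : ℝ) ^ (k + 1)) ^ 2 := by
      rw [← pow_mul]; exact pow_le_pow_right₀ hN1 (by omega)
    by_cases hc1 : (N : ℝ) ^ (k + 1) ≤ J ^ (2 * C + k + 4)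
    · apply trivial_q β K hK E _ (by positivity)
      calc _ ≤ _ := hpow2
        _ ≤ (J ^ (2 * C + k + 4)) ^ 2 := by gcongr
        _ = J ^ ((2 * C + k + 4) * 2) := by rw [← pow_mul]
        _ ≤ _ := hKE _ (by omega)
    by_cases hc2 : (N : ℝ) ≤ J ^ (2 * C + 3)
    · apply trivial_q β K hK E _ (by positivity)
      calc (N : ℝ) ^ (k + 1 + 1) ≤ (J ^ (2 * C + 3)) ^ (k + 1 + 1) := by gcongr
        _ = J ^ ((2 * C + 3) * (k + 2)) := by rw [← pow_mul]
        _ ≤ _ := hKE _ (by omega)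
    push Not at hc1 hc2
    have h4N : 4 * K ^ 2 ≤ N := by
      have : J ^ 1 ≤ J ^ (2 * C + 3) := pow_le_pow_right₀ hJ1 (by omega)
      nlinarith
    have hmany := many_h f N K hK h4N hS
    set T := (Ico 1 N).filter fun h =>
      N / (8 * K ^ 2) ≤ ‖∑ y ∈ range (N - h), ee (f (y + h) - f y)‖ with hT
    have hJK : (N : ℝ) / J ≤ N / (8 * K ^ 2) := by gcongr
    have hq : ∀ h ∈ T, ∃ q : ℕ, 1 ≤ q ∧ (q : ℝ) ≤ J ^ C ∧ nrm (q * (h * β)) ≤ ε := by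
      intro h hh
      rw [hT, mem_filter, mem_Ico] at hh
      obtain ⟨⟨hh1, hh2⟩, hh3⟩ := hh
      have hle : ((N - h : ℕ) : ℝ) ≤ N := by exact_mod_cast Nat.sub_le N h
      have hge : (N : ℝ) / J ≤ (N - h : ℕ) :=
        hJK.trans (hh3.trans (norm_sum_ee_le (fun y => f (y + h) - f y) _))
      obtain ⟨q, hq1, hq2, hq3⟩ := hC J (by linarith) _ _ (DD_diff (k + 1) h hf) (N - h)
        (by omega) (by
          refine le_trans ?_ (hJK.trans hh3)
          gcongr)
      refine ⟨q, hq1, hq2, hq3.trans ?_⟩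
      rw [hε]
      have h7 : (N : ℝ) ^ (k + 1) / J ^ (k + 1) ≤ ((N - h : ℕ) : ℝ) ^ (k + 1) := by
        rw [← div_pow]; gcongr
      calc J ^ C / ((N - h : ℕ) : ℝ) ^ (k + 1) ≤ J ^ C / ((N : ℝ) ^ (k + 1) / J ^ (k + 1)) := by
            gcongr
        _ = _ := by rw [div_div_eq_mul_div, ← pow_add, add_assoc]
    choose! Q hQ1 hQ2 hQ3 using hq
    have hJC : 0 < J ^ C := by positivity
    obtain ⟨q, hqt, hqc⟩ := exists_le_card_fiber_of_nsmul_le_card_of_maps_to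
      (s := T) (t := Icc 1 ⌊J ^ C⌋₊) (f := Q) (b := (T.card : ℝ) / J ^ C)
      (by
        intro h hh
        rw [mem_Icc]
        exact ⟨hQ1 h hh, Nat.le_floor (hQ2 h hh)⟩)
      (by
        rw [nonempty_Icc]
        exact Nat.le_floor (by simpa using one_le_pow₀ hJ1))
      (by
        rw [nsmul_eq_mul, Nat.card_Icc, Nat.add_sub_cancel]
        calc (⌊J ^ C⌋₊ : ℝ) * (T.card / J ^ C) ≤ J ^ C * (T.card / J ^ C) := by
              gcongr; exact Nat.floor_le hJC.le
          _ = _ := by field_simp)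
    rw [mem_Icc] at hqt
    have hqJ : (q : ℝ) ≤ J ^ C := (Nat.le_floor_iff hJC.le).1 hqt.2
    set T' := T.filter fun h => Q h = q with hT'
    have hK2J : J ≤ K2 := by
      rw [hK2]; exact le_self_pow₀ hJ1 (by omega)
    obtain ⟨r, hr1, hr2, hr3⟩ := recur K2 ε (q * β) N T'
      (by
        intro h hh
        rw [hT', mem_filter, hT, mem_filter, mem_Ico] at hh
        exact mem_range.2 hh.1.1.2)
      (by linarith) hε0
      (by
        rw [hε, mul_div_assoc', div_lt_one (by positivity)]
        refine lt_of_le_of_lt ?_ hc1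
        calc 32 * K2 * J ^ (C + k + 1) ≤ J * K2 * J ^ (C + k + 1) := by gcongr
          _ = J ^ (2 * C + k + 3) := by rw [hK2]; ring
          _ ≤ _ := pow_le_pow_right₀ hJ1 (by omega))
      (by
        refine le_trans ?_ hc2.le
        calc 12 * K2 ^ 2 ≤ J * K2 ^ 2 := by gcongr; linarith
          _ = _ := by rw [hK2]; ring)
      (by
        rw [div_le_iff₀ hJC] at hqc
        calc (N : ℝ) ≤ 4 * K ^ 2 * T.card := hmany
          _ ≤ J * (T'.card * J ^ C) := by gcongr; nlinarith
          _ = _ := by rw [hK2]; ring)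
      (by
        intro h hh
        rw [hT', mem_filter] at hh
        have := hQ3 h hh.1
        rw [hh.2] at this
        rwa [show (h : ℝ) * (q * β) = q * (h * β) by ring])
    refine ⟨r * q, ?_, ?_, ?_⟩
    · exact Nat.mul_pos hr1 hqt.1
    · push_cast
      calc (r : ℝ) * q ≤ (3 * K2) * J ^ C := by gcongr
        _ ≤ (J * K2) * J ^ C := by gcongr; linarith
        _ = J ^ (2 * C + 2) := by rw [hK2]; ring
        _ ≤ _ := hKE _ (by omega)
    · push_cast
      rw [mul_assoc]
      refine hr3.trans ?_
      calc 24 * K2 ^ 2 * ε / N ≤ J * K2 ^ 2 * ε / N := by gcongr; linarith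
        _ = J ^ (3 * C + k + 4) / (N : ℝ) ^ (k + 1 + 1) := by
            rw [hε, hK2]; field_simp; ring
        _ ≤ _ := by gcongr; exact hKE _ (by omega)

lemma abel_id (F G : ℕ → ℂ) (B : ℝ) (N : ℕ) (hB : ∀ n ≤ N, ‖∑ y ∈ range n, F y‖ ≤ B) :
    ‖∑ y ∈ range N, F y * G y - (∑ y ∈ range N, F y) * G N‖ ≤
      B * ∑ y ∈ range N, ‖G (y + 1) - G y‖ := by
  induction N with
  | zero => simp
  | succ n ih =>
    have h1 := ih fun m hm => hB m (by omega)
    have h2 : ∑ y ∈ range (n + 1), F y * G y - (∑ y ∈ range (n + 1), F y) * G (n + 1) =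
        (∑ y ∈ range n, F y * G y - (∑ y ∈ range n, F y) * G n) -
          (∑ y ∈ range (n + 1), F y) * (G (n + 1) - G n) := by
      rw [sum_range_succ, sum_range_succ F]; ring
    rw [h2, sum_range_succ (fun y => ‖G (y + 1) - G y‖), mul_add]
    refine (norm_sub_le _ _).trans ?_
    apply add_le_add h1
    rw [norm_mul]
    gcongr
    exact hB _ le_rfl

lemma abel (F : ℕ → ℂ) (g : ℕ → ℝ) (V B : ℝ) (N : ℕ) (hB : ∀ n ≤ N, ‖∑ y ∈ range n, F y‖ ≤ B)
    (hV : ∑ y ∈ range N, |g (y + 1) - g y| ≤ V) :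
    ‖∑ y ∈ range N, F y * ee (g y)‖ ≤ B * (1 + 2 * π * V) := by
  have hB0 : 0 ≤ B := (norm_nonneg _).trans (hB 0 (by omega))
  have h1 := abel_id F (fun y => ee (g y)) B N hB
  have h2 : ∑ y ∈ range N, ‖ee (g (y + 1)) - ee (g y)‖ ≤ 2 * π * V := by
    calc _ ≤ ∑ y ∈ range N, 2 * π * |g (y + 1) - g y| :=
          sum_le_sum fun y _ => norm_ee_sub_le _ _
      _ = 2 * π * ∑ y ∈ range N, |g (y + 1) - g y| := by rw [mul_sum]
      _ ≤ _ := by gcongr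
  have h3 : ‖(∑ y ∈ range N, F y) * ee (g N)‖ ≤ B := by
    rw [norm_mul, norm_ee, mul_one]; exact hB N le_rfl
  have h4 : ‖∑ y ∈ range N, F y * ee (g y)‖ ≤
      ‖∑ y ∈ range N, F y * ee (g y) - (∑ y ∈ range N, F y) * ee (g N)‖ +
      ‖(∑ y ∈ range N, F y) * ee (g N)‖ := by
    have := norm_add_le (∑ y ∈ range N, F y * ee (g y) - (∑ y ∈ range N, F y) * ee (g N))
      ((∑ y ∈ range N, F y) * ee (g N))
    simpa using this
  have h5 : B * ∑ y ∈ range N, ‖ee (g (y + 1)) - ee (g y)‖ ≤ B * (2 * π * V) := by gcongr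
  linarith

lemma eq_of_ee_eq_one {x : ℝ} (h : ee x = 1) : ∃ n : ℤ, x = n := by
  refine ⟨round x, ?_⟩
  have := norm_ee_sub_one_ge x
  rw [h, sub_self, norm_zero] at this
  have h2 : nrm x = 0 := le_antisymm (by linarith) (nrm_nonneg x)
  unfold nrm at h2
  linarith [abs_eq_zero.1 h2]

lemma orth (q : ℕ) (hq : 1 ≤ q) (x : ℤ) :
    ∑ t ∈ range q, ee (t * (x / q)) = if (q : ℤ) ∣ x then (q : ℂ) else 0 := by
  have hq0 : (q : ℝ) ≠ 0 := by positivity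
  split_ifs with h
  · obtain ⟨m, rfl⟩ := h
    rw [sum_congr rfl (g := fun _ => 1)]
    · simp
    · intro t _
      have := ee_int (t * m)
      rw [← this]; congr 1; push_cast; field_simp
  · have h1 : ∑ t ∈ range q, ee (t * (x / q)) = ∑ t ∈ range q, ee (x / q) ^ t :=
      sum_congr rfl fun t _ => ee_nat_mul _ _
    rw [h1]
    have h2 := geom_sum_mul (ee (x / q)) q
    have h3 : ee (x / q) ^ q = 1 := by
      rw [← ee_nat_mul, mul_div_cancel₀ _ hq0, ee_int]
    rw [h3, sub_self] at h2
    refine (mul_eq_zero.1 h2).resolve_right fun h4 => h ?_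
    obtain ⟨n, hn⟩ := eq_of_ee_eq_one (sub_eq_zero.1 h4)
    refine ⟨n, ?_⟩
    rw [div_eq_iff hq0] at hn
    have : (x : ℝ) = ((q * n : ℤ) : ℝ) := by push_cast; linarith
    exact_mod_cast this

lemma dft (q : ℕ) (hq : 1 ≤ q) (φ : ℕ → ℂ) (hφ : ∀ y, φ (y % q) = φ y) (y : ℕ) :
    φ y = ∑ t ∈ range q, ((1 / q : ℂ) * ∑ r ∈ range q, φ r * ee (-(t * (r / q)))) *
      ee (t * (y / q)) := by
  have hq0 : (q : ℂ) ≠ 0 := by exact_mod_cast (by omega : q ≠ 0)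
  have h1 : ∑ t ∈ range q, ((1 / q : ℂ) * ∑ r ∈ range q, φ r * ee (-(t * (r / q)))) *
      ee (t * (y / q)) = (1 / q : ℂ) * ∑ r ∈ range q, φ r *
        ∑ t ∈ range q, ee (t * (((y - r : ℤ) : ℝ) / q)) := by
    simp_rw [mul_sum, sum_mul]
    rw [sum_comm]
    refine sum_congr rfl fun r _ => sum_congr rfl fun t _ => ?_
    rw [mul_assoc, mul_assoc, ← ee_add]
    congr 3
    push_cast; ring
  rw [h1]
  simp_rw [orth q hq]
  rw [sum_eq_single (y % q)]
  · rw [if_pos, hφ]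
    · field_simp
    · push_cast
      exact Int.dvd_self_sub_emod
  · intro r hr hne
    rw [if_neg, mul_zero]
    intro hd
    apply hne
    rw [mem_range] at hr
    have h2 : (r : ℤ) ≡ y [ZMOD q] := (Int.modEq_iff_dvd).2 hd
    have h3 : r ≡ y [MOD q] := (Int.natCast_modEq_iff).1 h2
    have h4 : r % q = y % q := h3
    rwa [Nat.mod_eq_of_lt hr] at h4
  · intro h
    exact absurd (mem_range.2 (Nat.mod_lt _ hq)) h

lemma dft_bound (q : ℕ) (hq : 1 ≤ q) (φ : ℕ → ℂ) (hφ : ∀ y, φ (y % q) = φ y)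
    (hφ1 : ∀ y, ‖φ y‖ ≤ 1) (F : ℕ → ℂ) (n : ℕ) (B : ℝ)
    (hB : ∀ t ∈ range q, ‖∑ y ∈ range n, F y * ee (t * (y / q))‖ ≤ B) :
    ‖∑ y ∈ range n, F y * φ y‖ ≤ q * B := by
  have hq0 : (0 : ℝ) < q := by exact_mod_cast hq
  set c : ℕ → ℂ := fun t => (1 / q : ℂ) * ∑ r ∈ range q, φ r * ee (-(t * (r / q))) with hc
  have hc1 : ∀ t, ‖c t‖ ≤ 1 := by
    intro t
    rw [hc]
    simp only
    rw [norm_mul]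
    have h1 : ‖∑ r ∈ range q, φ r * ee (-(t * (r / q)))‖ ≤ q := by
      refine (norm_sum_le_of_le _ (f := fun r : ℕ => φ r * ee (-(t * (r / q)))) (n := fun _ => (1 : ℝ)) ?_).trans ?_
      · intro r _
        rw [norm_mul, norm_ee, mul_one]; exact hφ1 r
      · simp
    have h2 : ‖(1 / q : ℂ)‖ = 1 / q := by simp
    rw [h2, div_mul_eq_mul_div, one_mul, div_le_one hq0]
    exact h1
  have h3 : ∑ y ∈ range n, F y * φ y =
      ∑ t ∈ range q, c t * ∑ y ∈ range n, F y * ee (t * (y / q)) := by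
    simp_rw [mul_sum]
    rw [sum_comm]
    refine sum_congr rfl fun y _ => ?_
    rw [dft q hq φ hφ y, mul_sum]
    refine sum_congr rfl fun t _ => ?_
    rw [hc]; ring
  rw [h3]
  refine (norm_sum_le_of_le _ (n := fun _ => B) ?_).trans ?_
  · intro t ht
    rw [norm_mul]
    have := hB t ht
    have h5 := norm_nonneg (∑ y ∈ range n, F y * ee (t * (y / q)))
    nlinarith [hc1 t, norm_nonneg (c t)]
  · simp

theorem linThm (k : ℕ) : ∃ C : ℕ, ∀ K : ℝ, 2 ≤ K → ∀ (b : ℕ → ℝ) (N : ℕ), 1 ≤ N →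
    N / K ≤ ‖∑ y ∈ range N, ee (∑ j ∈ range (k + 2), b j * (y : ℝ) ^ j)‖ →
    ∃ q : ℕ, 1 ≤ q ∧ (q : ℝ) ≤ K ^ C ∧ nrm (q * b 1) ≤ K ^ C / (N : ℝ) := by
  induction k with
  | zero =>
    obtain ⟨C, hC⟩ := leadThm 0
    refine ⟨C, fun K hK b N hN hS => ?_⟩
    have := hC K hK _ _ (DD_poly 1 b) N hN hS
    simpa using this
  | succ k ih =>
    obtain ⟨C, hC⟩ := ih
    obtain ⟨C1, hC1⟩ := leadThm (k + 1)
    set fac := (k + 2).factorial with hfac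
    set D := 4 + 2 * C1 + fac with hD
    refine ⟨D * C + 2 * D + C1 + fac, fun K hK b N hN hS => ?_⟩
    have hK1 : 1 ≤ K := by linarith
    have hN0 : (0 : ℝ) < N := by exact_mod_cast hN
    obtain ⟨q0, hq1, hq2, hq3⟩ := hC1 K hK _ _ (DD_poly (k + 2) b) N hN hS
    rw [← hfac] at hq3
    have hfac0 : 1 ≤ fac := Nat.factorial_pos _
    have hfacK : (fac : ℝ) ≤ K ^ fac := by
      have h1 : (fac : ℝ) ≤ (2 : ℝ) ^ fac := by exact_mod_cast Nat.lt_two_pow_self.le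
      exact h1.trans (by gcongr)
    set q := q0 * fac with hq
    have hq0 : 1 ≤ q := Nat.mul_pos hq1 hfac0
    have hqR : (0 : ℝ) < q := by exact_mod_cast hq0
    have hqR1 : (1 : ℝ) ≤ q := by exact_mod_cast hq0
    have hqK : (q : ℝ) ≤ K ^ (C1 + fac) := by
      rw [hq, pow_add]; push_cast; gcongr
    set a := round ((q : ℝ) * b (k + 2)) with ha
    set θ := b (k + 2) - a / q with hθ
    have hθ1 : |θ| * (N : ℝ) ^ (k + 2) ≤ K ^ C1 := by
      have h1 : (q0 : ℝ) * (b (k + 2) * fac) = q * b (k + 2) := by rw [hq]; push_cast; ring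
      rw [h1, le_div_iff₀ (by positivity)] at hq3
      refine le_trans ?_ hq3
      gcongr
      have h2 : (q : ℝ) * θ = q * b (k + 2) - a := by rw [hθ]; field_simp
      have h3 : nrm (q * b (k + 2)) = q * |θ| := by
        unfold nrm; rw [← ha, ← h2, abs_mul, abs_of_pos hqR]
      rw [h3]
      nlinarith [abs_nonneg θ]
    -- by contradiction find n, t
    set K3 := K ^ D with hK3
    have hD1 : 1 ≤ D := by omega
    have hK3' : K ≤ K3 := le_self_pow₀ hK1 (by omega)
    set b' : ℕ → ℕ → ℝ := fun t j => b j + if j = 1 then (t : ℝ) / q else 0 with hb'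
    obtain ⟨n, hn, t, ht, hnt⟩ : ∃ n ≤ N, ∃ t ∈ range q,
        N / K3 ≤ ‖∑ y ∈ range n, ee (∑ j ∈ range (k + 2), b' t j * (y : ℝ) ^ j)‖ := by
      by_contra hcon
      push Not at hcon
      have hb1 : ∀ (t : ℕ) (y : ℕ), ee (∑ j ∈ range (k + 2), b' t j * (y : ℝ) ^ j) =
          ee (∑ j ∈ range (k + 2), b j * (y : ℝ) ^ j) * ee (t * (y / q)) := by
        intro t y
        rw [← ee_add]; congr 1
        simp only [hb', add_mul, sum_add_distrib, ite_mul, zero_mul]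
        rw [sum_ite_eq' (range (k + 2)) 1, if_pos (mem_range.2 (by omega))]
        ring
      have h1 : ∀ n ≤ N, ‖∑ y ∈ range n, ee (∑ j ∈ range (k + 2), b j * (y : ℝ) ^ j) *
          ee (a * (y : ℝ) ^ (k + 2) / q)‖ ≤ q * (N / K3) := by
        intro n hn
        apply dft_bound q hq0 (fun y => ee (a * (y : ℝ) ^ (k + 2) / q))
        · intro y
          have hy : (y : ℝ) = ((y % q : ℕ) : ℝ) + q * ((y / q : ℕ) : ℝ) := by
            exact_mod_cast (Nat.mod_add_div y q).symm
          obtain ⟨m, hm⟩ : (q : ℤ) ∣ ((y : ℤ) ^ (k + 2) - ((y % q : ℕ) : ℤ) ^ (k + 2)) := by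
            refine dvd_trans ?_ (sub_dvd_pow_sub_pow _ _ (k + 2))
            push_cast
            exact Int.dvd_self_sub_emod
          have hm' : (y : ℝ) ^ (k + 2) - ((y % q : ℕ) : ℝ) ^ (k + 2) = q * m := by
            exact_mod_cast hm
          have : (a : ℝ) * (y : ℝ) ^ (k + 2) / q =
              a * ((y % q : ℕ) : ℝ) ^ (k + 2) / q + ((a * m : ℤ) : ℝ) := by
            rw [show (y : ℝ) ^ (k + 2) = ((y % q : ℕ) : ℝ) ^ (k + 2) + q * m by linarith]
            push_cast; field_simp
          rw [this, ee_add_int]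
        · intro y; rw [norm_ee]
        · intro t ht
          have := (hcon n hn t ht).le
          simp_rw [hb1] at this
          exact this
      have h2 := abel _ (fun y : ℕ => θ * (y : ℝ) ^ (k + 2)) (K ^ C1) _ N h1 (by
        have : ∀ y : ℕ, |θ * ((y + 1 : ℕ) : ℝ) ^ (k + 2) - θ * (y : ℝ) ^ (k + 2)| =
            |θ| * ((y + 1 : ℕ) : ℝ) ^ (k + 2) - |θ| * (y : ℝ) ^ (k + 2) := by
          intro y
          rw [← mul_sub, abs_mul, ← mul_sub]
          congr 1
          apply abs_of_nonneg
          rw [sub_nonneg]; gcongr; omega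
        simp_rw [this]
        rw [sum_range_sub (fun y : ℕ => |θ| * (y : ℝ) ^ (k + 2))]
        simpa using hθ1)
      have h3 : ∑ y ∈ range N, ee (∑ j ∈ range (k + 1 + 2), b j * (y : ℝ) ^ j) =
          ∑ y ∈ range N, ee (∑ j ∈ range (k + 2), b j * (y : ℝ) ^ j) *
          ee (a * (y : ℝ) ^ (k + 2) / q) * ee (θ * (y : ℝ) ^ (k + 2)) := by
        refine sum_congr rfl fun y _ => ?_
        rw [← ee_add, ← ee_add, sum_range_succ]
        congr 1
        rw [hθ]; ring
      rw [h3] at hS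
      have h4 := hS.trans h2
      have hπ : 1 + 2 * π * K ^ C1 < 8 * K ^ C1 := by
        have := Real.pi_lt_d2
        have h5 : 1 ≤ K ^ C1 := one_le_pow₀ hK1
        nlinarith
      have h8 : (8 : ℝ) ≤ K ^ 3 := by
        have : (2 : ℝ) ^ 3 ≤ K ^ 3 := by gcongr
        linarith
      have h9 : (N : ℝ) / K < N / K := by
        calc (N : ℝ) / K ≤ _ := h4
          _ < q * (N / K3) * (8 * K ^ C1) := by
              apply mul_lt_mul_of_pos_left hπ (by positivity)
          _ ≤ K ^ (C1 + fac) * (N / K3) * (K ^ 3 * K ^ C1) := by gcongr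
          _ = N / K := by
              rw [hK3, hD]; field_simp; ring
      exact lt_irrefl _ h9
    have hnR : (N : ℝ) / K3 ≤ n := hnt.trans (norm_sum_ee_le (fun y : ℕ => ∑ j ∈ range (k + 2), b' t j * (y : ℝ) ^ j) n)
    have hn0 : (0 : ℝ) < n := lt_of_lt_of_le (by positivity) hnR
    have hnN : (n : ℝ) ≤ N := by exact_mod_cast hn
    obtain ⟨r, hr1, hr2, hr3⟩ := hC K3 (by linarith) (b' t) n (by exact_mod_cast hn0) (by
      refine le_trans ?_ hnt
      gcongr)
    refine ⟨q * r, Nat.mul_pos hq0 hr1, ?_, ?_⟩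
    · push_cast
      calc (q : ℝ) * r ≤ K ^ (C1 + fac) * K3 ^ C := by gcongr
        _ = K ^ (C1 + fac + D * C) := by rw [hK3]; ring
        _ ≤ _ := pow_le_pow_right₀ hK1 (by omega)
    · have h1 : ((q * r : ℕ) : ℝ) * b 1 = q * (r * b' t 1) + ((-(r * t) : ℤ) : ℝ) := by
        simp only [hb', if_true]; push_cast; field_simp; ring
      rw [h1, nrm_add_int]
      refine (nrm_mul_le _ _).trans ?_
      calc (q : ℝ) * nrm (r * b' t 1) ≤ K ^ (C1 + fac) * (K3 ^ C / n) := by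
            gcongr; exact nrm_nonneg _
        _ ≤ K ^ (C1 + fac) * (K3 ^ C / (N / K3)) := by gcongr
        _ = K ^ (C1 + fac + D * C + D) / N := by
            rw [hK3]; field_simp; ring
        _ ≤ _ := 
            div_le_div_of_nonneg_right (pow_le_pow_right₀ hK1 (by omega)) hN0.le

noncomputable def fej (H : ℕ) (x : ℝ) : ℝ := ‖∑ j ∈ range H, ee (j * x)‖ ^ 2

lemma fej_nonneg (H : ℕ) (x : ℝ) : 0 ≤ fej H x := by unfold fej; positivity

lemma fej_eq (H : ℕ) (x : ℝ) :
    fej H x = H + 2 * (∑ h ∈ Ico 1 H, ((H - h : ℕ) : ℂ) * ee (h * x)).re := by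
  unfold fej
  rw [weyl_id (fun j => j * x)]
  have key : (∑ h ∈ Ico 1 H, ∑ y ∈ range (H - h), ee (((y + h : ℕ) : ℝ) * x - y * x)) =
      ∑ h ∈ Ico 1 H, ((H - h : ℕ) : ℂ) * ee (h * x) := by
    refine sum_congr rfl fun h _ => ?_
    have e : ∀ y : ℕ, ((y + h : ℕ) : ℝ) * x - y * x = h * x := by
      intro y; push_cast; ring
    simp_rw [e]
    simp
  rw [key]

lemma fej_tail (H : ℕ) (x η : ℝ) (hη : 0 < η) (h : η ≤ nrm x) : fej H x ≤ 1 / (4 * η ^ 2) := by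
  have h1 := geom_bound x 0 H
  simp only [zero_add] at h1
  unfold fej
  set s := ‖∑ j ∈ range H, ee (j * x)‖
  have hs : 0 ≤ s := norm_nonneg _
  have h2 : 2 * η * s ≤ 1 := by nlinarith
  rw [le_div_iff₀ (by positivity)]
  calc s ^ 2 * (4 * η ^ 2) = (2 * η * s) ^ 2 := by ring
    _ ≤ 1 ^ 2 := by gcongr
    _ = 1 := by norm_num

lemma fej_total (H : ℕ) (hH : 1 ≤ H) (x : ℝ) :
    ∑ m ∈ range H, fej H (x - m / H) = (H : ℝ) ^ 2 := by
  simp_rw [fej_eq, sum_add_distrib, ← mul_sum, ← Complex.re_sum]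
  rw [sum_comm]
  have : ∑ h ∈ Ico 1 H, ∑ m ∈ range H, ((H - h : ℕ) : ℂ) * ee (h * (x - m / H)) = 0 := by
    apply sum_eq_zero
    intro h hh
    rw [mem_Ico] at hh
    have h1 : ∀ m : ℕ, ((H - h : ℕ) : ℂ) * ee (h * (x - m / H)) =
        ((H - h : ℕ) : ℂ) * ee (h * x) * ee (m * (((-h : ℤ) : ℝ) / H)) := by
      intro m
      rw [mul_assoc, ← ee_add]
      congr 2; push_cast; ring
    simp_rw [h1]
    rw [← mul_sum, orth H hH, if_neg, mul_zero]
    rw [Int.dvd_neg]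
    intro hd
    have := Int.le_of_dvd (by omega) hd
    omega
  rw [this]
  simp; ring

lemma fej_sum (f : ℕ → ℝ) (N H : ℕ) (hH : 1 ≤ H)
    (hyp : ∀ h : ℕ, 1 ≤ h → h < H → ‖∑ y ∈ range N, ee (h * f y)‖ ≤ N / (H : ℝ) ^ 2) (c : ℝ) :
    ∑ y ∈ range N, fej H (f y - c) ≤ N * (H + 2) := by
  have hH0 : (0 : ℝ) < H := by exact_mod_cast hH
  simp_rw [fej_eq, sum_add_distrib, ← mul_sum, ← Complex.re_sum]
  rw [sum_comm]
  have h1 : ‖∑ h ∈ Ico 1 H, ∑ y ∈ range N, ((H - h : ℕ) : ℂ) * ee (h * (f y - c))‖ ≤ N := by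
    refine (norm_sum_le_of_le _ (n := fun _ => (N : ℝ) / H) ?_).trans ?_
    · intro h hh
      rw [mem_Ico] at hh
      have h2 : ∀ y, ((H - h : ℕ) : ℂ) * ee (h * (f y - c)) =
          (((H - h : ℕ) : ℂ) * ee (-(h * c))) * ee (h * f y) := by
        intro y
        rw [mul_assoc, ← ee_add]; congr 2; ring
      simp_rw [h2]
      rw [← mul_sum, norm_mul, norm_mul, norm_ee, mul_one, Complex.norm_natCast]
      have h3 : ((H - h : ℕ) : ℝ) ≤ H := by exact_mod_cast Nat.sub_le H h
      calc _ ≤ (H : ℝ) * (N / (H : ℝ) ^ 2) := by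
            gcongr; exact hyp h hh.1 hh.2
        _ = _ := by field_simp
    · rw [sum_const, nsmul_eq_mul, Nat.card_Ico]
      have h3 : ((H - 1 : ℕ) : ℝ) ≤ H := by exact_mod_cast Nat.sub_le H 1
      calc _ ≤ (H : ℝ) * (N / H) := by gcongr
        _ = _ := by field_simp
  have h2 := (Complex.re_le_norm _).trans h1
  simp only [sum_const, card_range, nsmul_eq_mul]
  linarith

lemma fej_count (f : ℕ → ℝ) (N H : ℕ) (hH : 1 ≤ H)
    (hyp : ∀ h : ℕ, 1 ≤ h → h < H → ‖∑ y ∈ range N, ee (h * f y)‖ ≤ N / (H : ℝ) ^ 2)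
    (Y A : Finset ℕ) (hY : Y ⊆ range N) (hA : A ⊆ range H) (η : ℝ) (hη : 0 < η)
    (h : ∀ y ∈ Y, ∀ m ∈ range H, m ∉ A → η ≤ nrm (f y - m / H)) :
    Y.card * ((H : ℝ) ^ 2 - H / (4 * η ^ 2)) ≤ A.card * (N * (H + 2)) := by
  have h1 : ∑ m ∈ A, ∑ y ∈ Y, fej H (f y - m / H) ≤ A.card * (N * (H + 2)) := by
    rw [← nsmul_eq_mul]
    apply sum_le_card_nsmul
    intro m _
    refine le_trans ?_ (fej_sum f N H hH hyp (m / H))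
    exact sum_le_sum_of_subset_of_nonneg hY fun _ _ _ => fej_nonneg _ _
  refine le_trans ?_ h1
  rw [sum_comm, ← nsmul_eq_mul]
  apply card_nsmul_le_sum
  intro y hy
  have h2 := fej_total H hH (f y)
  rw [← sum_sdiff hA] at h2
  have h3 : ∑ m ∈ range H \ A, fej H (f y - m / H) ≤ H / (4 * η ^ 2) := by
    refine (sum_le_card_nsmul _ _ (1 / (4 * η ^ 2)) ?_).trans ?_
    · intro m hm
      rw [mem_sdiff] at hm
      exact fej_tail _ _ _ hη (h y hy m hm.1 hm.2)
    · rw [nsmul_eq_mul, mul_one_div]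
      gcongr
      exact (card_le_card sdiff_subset).trans (by simp)
  linarith

lemma cardA (H : ℕ) (a b : ℝ) (ha : a ≤ 1) (hb : 0 ≤ b) :
    ((((range H).filter fun m : ℕ => (m : ℝ) / H < b ∨ a < (m : ℝ) / H).card : ℕ) : ℝ)
      ≤ (b + 1 - a) * H + 2 := by
  rcases Nat.eq_zero_or_pos H with h0 | hH
  · subst h0; simp
  have hH0 : (0 : ℝ) < H := by exact_mod_cast hH
  rw [filter_or]
  have h1 : (((range H).filter fun m : ℕ => (m : ℝ) / H < b).card : ℝ) ≤ b * H + 1 := by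
    have : ((range H).filter fun m : ℕ => (m : ℝ) / H < b) ⊆ range ⌈b * H⌉₊ := by
      intro m hm
      rw [mem_filter, div_lt_iff₀ hH0] at hm
      rw [mem_range, Nat.lt_ceil]; exact hm.2
    have h2 := card_le_card this
    rw [card_range] at h2
    have h3 := Nat.ceil_lt_add_one (a := b * H) (by positivity)
    have h4 : (((range H).filter fun m : ℕ => (m : ℝ) / H < b).card : ℝ) ≤ ⌈b * H⌉₊ := by
      exact_mod_cast h2
    linarith
  have h2 : (((range H).filter fun m : ℕ => a < (m : ℝ) / H).card : ℝ) ≤ (1 - a) * H + 1 := by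
    have h3 : ((range H).filter fun m : ℕ => a < (m : ℝ) / H).card ≤ (range ⌈(1 - a) * H⌉₊).card := by
      apply card_le_card_of_injOn (fun m => H - 1 - m)
      · intro m hm
        simp only [coe_filter, mem_range, Set.mem_setOf_eq] at hm
        rw [lt_div_iff₀ hH0] at hm
        simp only [coe_range, Set.mem_Iio]
        rw [Nat.lt_ceil]
        have : ((H - 1 - m : ℕ) : ℝ) = H - 1 - m := by
          rw [Nat.cast_sub (by omega), Nat.cast_sub (by omega)]; simp
        rw [this]; nlinarith
      · intro x hx y hy hxy
        simp only [coe_filter, mem_range, Set.mem_setOf_eq] at hx hy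
        simp only at hxy
        omega
    rw [card_range] at h3
    have h4 := Nat.ceil_lt_add_one (a := (1 - a) * H) (mul_nonneg (by linarith) hH0.le)
    have h5 : (((range H).filter fun m : ℕ => a < (m : ℝ) / H).card : ℝ) ≤ ⌈(1 - a) * H⌉₊ := by
      exact_mod_cast h3
    linarith
  have h3 := card_union_le ((range H).filter fun m : ℕ => (m : ℝ) / H < b)
    ((range H).filter fun m : ℕ => a < (m : ℝ) / H)
  have h4 : ((((range H).filter fun m : ℕ => (m : ℝ) / H < b) ∪
    ((range H).filter fun m : ℕ => a < (m : ℝ) / H)).card : ℝ) ≤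
    ((range H).filter fun m : ℕ => (m : ℝ) / H < b).card +
    ((range H).filter fun m : ℕ => a < (m : ℝ) / H).card := by exact_mod_cast h3
  linarith

lemma upper (f : ℕ → ℝ) (N G : ℕ) (hG : 2 ≤ G)
    (hyp : ∀ h : ℕ, 1 ≤ h → h < G ^ 3 → ‖∑ y ∈ range N, ee (h * f y)‖ ≤ N / ((G ^ 3 : ℕ) : ℝ) ^ 2)
    (Y : Finset ℕ) (hY : Y ⊆ range N) (a b μ : ℝ) (ha : a ≤ 1) (hb : 0 ≤ b)
    (hμ : b + 1 - a = μ + 2 / G) (hμ1 : μ ≤ 1) (hμ0 : 0 ≤ μ)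
    (h : ∀ y ∈ Y, ∀ t : ℝ, b ≤ t → t ≤ a → 1 / (G : ℝ) ≤ nrm (Int.fract (f y) - t)) :
    (Y.card : ℝ) ≤ N * (μ + 10 / G) := by
  have hG0 : (2 : ℝ) ≤ G := by exact_mod_cast hG
  have hGp : (0 : ℝ) < G := by linarith
  have h1 := fej_count f N (G ^ 3) (Nat.pow_pos (by omega)) hyp Y
    ((range (G ^ 3)).filter fun m : ℕ => (m : ℝ) / ((G ^ 3 : ℕ) : ℝ) < b ∨ a < (m : ℝ) / ((G ^ 3 : ℕ) : ℝ))
    hY (filter_subset _ _) (1 / G) (by positivity) (by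
      intro y hy m hm hmA
      rw [mem_filter, not_and_or, not_or] at hmA
      have := hmA.resolve_left (fun h => h hm)
      have h2 := h y hy _ (not_lt.1 this.1) (not_lt.1 this.2)
      have h3 : f y - (m : ℝ) / ((G ^ 3 : ℕ) : ℝ) =
        (Int.fract (f y) - (m : ℝ) / ((G ^ 3 : ℕ) : ℝ)) + (⌊f y⌋ : ℤ) := by
        rw [Int.fract]; ring
      rw [h3, nrm_add_int]
      exact h2)
  have h2 := cardA (G ^ 3) a b ha hb
  set c : ℝ := (((range (G ^ 3)).filter fun m : ℕ => (m : ℝ) / ((G ^ 3 : ℕ) : ℝ) < b ∨ a < (m : ℝ) / ((G ^ 3 : ℕ) : ℝ)).card : ℝ)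
  rw [hμ] at h2
  push_cast at h1 h2
  have hYN : (Y.card : ℝ) ≤ N := by
    have := card_le_card hY
    rw [card_range] at this
    exact_mod_cast this
  set g := (G : ℝ)
  set Yc := (Y.card : ℝ)
  have hN : (0 : ℝ) ≤ N := Nat.cast_nonneg _
  have h3 : Yc * (g ^ 6 - g ^ 5 / 4) ≤ N * ((μ + 2 / g) * g ^ 3 + 2) * (g ^ 3 + 2) := by
    calc Yc * (g ^ 6 - g ^ 5 / 4) = Yc * ((g ^ 3) ^ 2 - g ^ 3 / (4 * (1 / g) ^ 2)) := by
          congr 1; field_simp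
      _ ≤ _ := h1
      _ ≤ ((μ + 2 / g) * g ^ 3 + 2) * (N * (g ^ 3 + 2)) := by gcongr
      _ = _ := by ring
  have h4 : Yc * g ^ 6 ≤ N * (g ^ 5 / 4) + N * ((μ + 2 / g) * g ^ 3 + 2) * (g ^ 3 + 2) := by
    have : Yc * (g ^ 5 / 4) ≤ N * (g ^ 5 / 4) := by gcongr
    linarith
  have h5 : N * (g ^ 5 / 4) + N * ((μ + 2 / g) * g ^ 3 + 2) * (g ^ 3 + 2) ≤
      N * (μ + 10 / g) * g ^ 6 := by
    have e1 : (N : ℝ) * (g ^ 5 / 4) + N * ((μ + 2 / g) * g ^ 3 + 2) * (g ^ 3 + 2) =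
      N * (g ^ 5 / 4 + (μ * g ^ 3 + 2 * g ^ 2 + 2) * (g ^ 3 + 2)) := by field_simp
    have e2 : (N : ℝ) * (μ + 10 / g) * g ^ 6 = N * (μ * g ^ 6 + 10 * g ^ 5) := by field_simp
    rw [e1, e2]
    refine mul_le_mul_of_nonneg_left ?_ hN
    have k0 : 4 ≤ g ^ 2 := by nlinarith
    have k1 : μ * g ^ 3 ≤ g ^ 3 := by
      have : 0 ≤ g ^ 3 := by positivity
      nlinarith
    have k2 : 2 * g ^ 2 ≤ g ^ 3 := by nlinarith [sq_nonneg g]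
    have k3 : 2 * g ^ 3 ≤ g ^ 4 := by nlinarith [pow_pos hGp 3]
    have k4 : 2 * g ^ 4 ≤ g ^ 5 := by nlinarith [pow_pos hGp 4]
    have e3 : (μ * g ^ 3 + 2 * g ^ 2 + 2) * (g ^ 3 + 2) =
      μ * g ^ 6 + 2 * (μ * g ^ 3) + 2 * g ^ 5 + 4 * g ^ 2 + 2 * g ^ 3 + 4 := by ring
    rw [e3]
    linarith
  have h6 := h4.trans h5
  exact le_of_mul_le_mul_right h6 (by positivity)

theorem disc (f : ℕ → ℝ) (N G : ℕ) (hG : 2 ≤ G)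
    (hyp : ∀ h : ℕ, 1 ≤ h → h < G ^ 3 → ‖∑ y ∈ range N, ee (h * f y)‖ ≤ N / ((G ^ 3 : ℕ) : ℝ) ^ 2)
    (δ : ℝ) (hδ0 : 0 ≤ δ) (hδ1 : δ ≤ 1) :
    |(((range N).filter fun y => Int.fract (f y) < δ).card : ℝ) - δ * N| ≤ 10 * N / G := by
  have hG0 : (2 : ℝ) ≤ G := by exact_mod_cast hG
  have hGi : 0 < 1 / (G : ℝ) := by positivity
  have hGi1 : 1 / (G : ℝ) ≤ 1 := by rw [div_le_one (by linarith)]; linarith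
  have h1 := upper f N G hG hyp ((range N).filter fun y => Int.fract (f y) < δ) (filter_subset _ _)
    (1 - 1 / G) (δ + 1 / G) δ (by linarith) (by linarith) (by ring) hδ1 hδ0 (by
      intro y hy t ht1 ht2
      rw [mem_filter] at hy
      have := Int.fract_nonneg (f y)
      have h2 : |Int.fract (f y) - t| = t - Int.fract (f y) := by
        rw [abs_sub_comm]; apply abs_of_nonneg; linarith
      apply nrm_ge <;> rw [h2] <;> linarith)
  have h2 := upper f N G hG hyp ((range N).filter fun y => ¬ Int.fract (f y) < δ) (filter_subset _ _)
    (δ - 1 / G) (1 / G) (1 - δ) (by linarith) (by linarith) (by ring) (by linarith) (by linarith) (by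
      intro y hy t ht1 ht2
      rw [mem_filter, not_lt] at hy
      have := Int.fract_lt_one (f y)
      have h2 : |Int.fract (f y) - t| = Int.fract (f y) - t := by
        apply abs_of_nonneg; linarith
      apply nrm_ge <;> rw [h2] <;> linarith)
  have h3 := card_filter_add_card_filter_not (s := range N) (fun y => Int.fract (f y) < δ)
  rw [card_range] at h3
  have h4 : (((range N).filter fun y => Int.fract (f y) < δ).card : ℝ) +
    ((range N).filter fun y => ¬ Int.fract (f y) < δ).card = N := by exact_mod_cast h3
  have e : (N : ℝ) * (δ + 10 / G) = δ * N + 10 * N / G := by ring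
  have e2 : (N : ℝ) * (1 - δ + 10 / G) = N - δ * N + 10 * N / G := by ring
  rw [abs_le]
  constructor <;> linarith

lemma nonL (α : ℝ) (h : ¬ IsLiouvilleReal α) :
    ∃ n : ℕ, ∀ q : ℕ, 1 ≤ q → 1 ≤ nrm (q * α) * (2 * q : ℝ) ^ n := by
  unfold IsLiouvilleReal at h
  push Not at h
  obtain ⟨n, hn⟩ := h
  refine ⟨n, fun q hq => ?_⟩
  have hq0 : (1 : ℝ) ≤ q := by exact_mod_cast hq
  have h1 := hn (2 * round ((q : ℝ) * α)) (2 * q) (by omega)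
  push_cast at h1
  have h2 : α - 2 * (round ((q : ℝ) * α) : ℝ) / (2 * q) = (q * α - round ((q : ℝ) * α)) / q := by
    field_simp
  rw [h2, abs_div, zpow_neg, zpow_natCast, abs_of_pos (show (0 : ℝ) < q by linarith)] at h1
  have h3 : |(q : ℝ) * α - round ((q : ℝ) * α)| = nrm (q * α) := rfl
  rw [h3, lt_div_iff₀ (by linarith), inv_mul_lt_iff₀ (by positivity)] at h1
  linarith

lemma expBound (α : ℝ) (h : ¬ IsLiouvilleReal α) (k : ℕ) :
    ∃ B : ℕ, 1 ≤ B ∧ ∀ G : ℕ, 2 ≤ G → ∀ N : ℕ, G ^ B ≤ N → ∀ b : ℕ → ℝ, b 1 = α →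
      ∀ h : ℕ, 1 ≤ h → h < G ^ 3 →
      ‖∑ y ∈ range N, ee (h * ∑ j ∈ range (k + 2), b j * (y:ℝ)^j)‖ ≤ N / ((G ^ 3 : ℕ) : ℝ) ^ 2 := by
  obtain ⟨n, hn⟩ := nonL α h
  obtain ⟨C, hC⟩ := linThm k
  refine ⟨6 * C + n * (6 * C + 4) + 1, by omega, ?_⟩
  intro G hG N hN b hb h hh1 hh2
  have hG0 : (2 : ℝ) ≤ G := by exact_mod_cast hG
  have hN1 : 1 ≤ N := le_trans (Nat.pow_pos (by omega)) hN
  have hN0 : (0 : ℝ) < N := by exact_mod_cast hN1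
  have hNr : (G : ℝ) ^ (6 * C + n * (6 * C + 4) + 1) ≤ N := by exact_mod_cast hN
  by_contra hcon
  rw [not_le] at hcon
  have e : ∀ y : ℕ, (h : ℝ) * ∑ j ∈ range (k + 2), b j * (y:ℝ)^j =
      ∑ j ∈ range (k + 2), (h * b j) * (y:ℝ)^j := by
    intro y; rw [mul_sum]; exact sum_congr rfl fun j _ => by ring
  simp_rw [e] at hcon
  have hK : (2 : ℝ) ≤ ((G ^ 3 : ℕ) : ℝ) ^ 2 := by
    push_cast
    rw [← pow_mul]
    calc (2 : ℝ) ≤ G := hG0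
      _ ≤ G ^ (3 * 2) := le_self_pow₀ (by linarith) (by norm_num)
  obtain ⟨q, hq1, hq2, hq3⟩ := hC _ hK (fun j => h * b j) N hN1 hcon.le
  have e2 : ((((G ^ 3 : ℕ) : ℝ) ^ 2) ^ C) = (G : ℝ) ^ (6 * C) := by
    push_cast; rw [← pow_mul, ← pow_mul]
    congr 1; ring
  rw [e2] at hq2 hq3
  simp only [hb] at hq3
  have h1 := hn (q * h) (Nat.mul_pos hq1 hh1)
  push_cast at h1
  rw [mul_assoc] at h1
  have hh : (h : ℝ) ≤ G ^ 3 := by exact_mod_cast hh2.le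
  have h2 : (2 * (q * h) : ℝ) ≤ (G : ℝ) ^ (6 * C + 4) := by
    calc (2 * (q * h) : ℝ) ≤ G * (G ^ (6 * C) * G ^ 3) := by gcongr
      _ = _ := by ring
  have h3 : nrm (q * (h * α)) * (2 * (q * h) : ℝ) ^ n ≤
      (G : ℝ) ^ (6 * C) / N * ((G : ℝ) ^ (6 * C + 4)) ^ n := by gcongr
  have h4 : 1 ≤ (G : ℝ) ^ (6 * C) / N * ((G : ℝ) ^ (6 * C + 4)) ^ n := h1.trans h3
  rw [div_mul_eq_mul_div, le_div_iff₀ hN0, ← pow_mul, ← pow_add] at h4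
  have h5 : (G : ℝ) ^ (6 * C + (6 * C + 4) * n) < (G : ℝ) ^ (6 * C + n * (6 * C + 4) + 1) :=
    pow_lt_pow_right₀ (by linarith) (by rw [mul_comm n]; omega)
  linarith

lemma dvd_floor_iff (u : ℝ) (d : ℕ) (hd : 1 ≤ d) :
    (d : ℤ) ∣ ⌊u⌋ ↔ Int.fract (u / d) < 1 / d := by
  have hd0 : (0 : ℝ) < d := by exact_mod_cast hd
  have key : ⌊u / d⌋ = ⌊u⌋ / (d : ℤ) := by
    rw [Int.floor_div_natCast]
  have h2 : Int.fract (u / d) = u / d - (⌊u⌋ / (d : ℤ) : ℤ) := by rw [Int.fract, key]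
  rw [h2, sub_lt_iff_lt_add, div_lt_iff₀ hd0, add_mul, one_div, inv_mul_cancel₀ hd0.ne']
  have h3 := Int.emod_add_mul_ediv ⌊u⌋ d
  have h4 := Int.emod_nonneg ⌊u⌋ (show (d : ℤ) ≠ 0 by omega)
  rw [Int.dvd_iff_emod_eq_zero]
  have h5 : u < 1 + ((⌊u⌋ / (d : ℤ) : ℤ) : ℝ) * d ↔ ⌊u⌋ < 1 + (⌊u⌋ / (d : ℤ)) * d := by
    rw [Int.floor_lt]; push_cast; rfl
  rw [h5]
  constructor
  · intro h; rw [mul_comm]; omega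
  · intro h; rw [mul_comm] at h; omega

lemma Ad_bound (P : Polynomial ℝ) (hP : ¬ IsLiouvilleReal (P.coeff 1)) :
    ∃ B : ℕ, 1 ≤ B ∧ ∀ G : ℕ, 2 ≤ G → ∀ X : ℝ, 1 ≤ X → ∀ d : ℕ, 1 ≤ d → G ^ B ≤ ⌊X⌋₊ / d →
      |((AP P d X).card : ℝ) - X / (d : ℝ) ^ 2| ≤ 10 * X / (d * G) + 3 := by
  obtain ⟨B, hB1, hB⟩ := expBound _ hP P.natDegree
  refine ⟨B, hB1, ?_⟩
  intro G hG X hX d hd hN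
  set N := ⌊X⌋₊ / d with hNd
  have hd0 : (1 : ℝ) ≤ d := by exact_mod_cast hd
  have hG0 : (2 : ℝ) ≤ G := by exact_mod_cast hG
  set f : ℕ → ℝ := fun y => P.eval ((d : ℝ) * y) / d with hf
  have hf2 : ∀ y : ℕ, f y = ∑ j ∈ range (P.natDegree + 2), (P.coeff j * d ^ j / d) * (y:ℝ)^j := by
    intro y
    simp only [hf]
    rw [Polynomial.eval_eq_sum_range' (n := P.natDegree + 2) (by omega), sum_div]
    refine sum_congr rfl fun j _ => ?_
    rw [mul_pow]; ring
  have h1 := disc f N G hG (by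
    intro h hh1 hh2
    simp_rw [hf2]
    exact hB G hG N hN (fun j => P.coeff j * d ^ j / d) (by field_simp) h hh1 hh2) (1 / d)
    (by positivity) (by rw [div_le_one (by linarith)]; exact hd0)
  have h2 : (AP P d X).card = ((Icc 1 N).filter fun y => Int.fract (f y) < 1 / d).card := by
    symm
    unfold AP
    refine card_bij (fun y _ => d * y) ?_ ?_ ?_
    · intro y hy
      rw [mem_filter, mem_Icc] at hy ⊢
      refine ⟨⟨Nat.mul_pos hd hy.1.1, ?_⟩, ?_, ?_⟩
      · have := (Nat.le_div_iff_mul_le hd).1 hy.1.2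
        rw [mul_comm]; exact this
      · push_cast; exact dvd_mul_right _ _
      · rw [dvd_floor_iff _ _ hd]
        push_cast
        exact hy.2
    · intro a _ b _ hab
      exact Nat.eq_of_mul_eq_mul_left hd hab
    · intro x hx
      rw [mem_filter, mem_Icc] at hx
      obtain ⟨⟨hx1, hx2⟩, hx3, hx4⟩ := hx
      obtain ⟨y, rfl⟩ := Int.natCast_dvd_natCast.1 hx3
      refine ⟨y, ?_, rfl⟩
      rw [mem_filter, mem_Icc]
      refine ⟨⟨Nat.pos_of_mul_pos_left hx1, ?_⟩, ?_⟩
      · rw [hNd, Nat.le_div_iff_mul_le hd, mul_comm]; exact hx2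
      · rw [dvd_floor_iff _ _ hd] at hx4
        push_cast at hx4
        exact hx4
  have h3 : ((range N).filter fun y => Int.fract (f y) < 1 / d).card ≤ (AP P d X).card + 1 := by
    rw [h2]
    refine le_trans (card_le_card (t := insert 0 ((Icc 1 N).filter fun y => Int.fract (f y) < 1 / d)) ?_)
      (card_insert_le _ _)
    intro y hy
    rw [mem_filter, mem_range] at hy
    rw [mem_insert, mem_filter, mem_Icc]
    by_cases h0 : y = 0
    · left; exact h0
    · right; exact ⟨by omega, hy.2⟩
  have h4 : (AP P d X).card ≤ ((range N).filter fun y => Int.fract (f y) < 1 / d).card + 1 := by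
    rw [h2]
    refine le_trans (card_le_card (t := insert N ((range N).filter fun y => Int.fract (f y) < 1 / d)) ?_)
      (card_insert_le _ _)
    intro y hy
    rw [mem_filter, mem_Icc] at hy
    rw [mem_insert, mem_filter, mem_range]
    by_cases h0 : y = N
    · left; exact h0
    · right; exact ⟨by omega, hy.2⟩
  have h3' : (((range N).filter fun y => Int.fract (f y) < 1 / d).card : ℝ) ≤ (AP P d X).card + 1 := by
    exact_mod_cast h3
  have h4' : ((AP P d X).card : ℝ) ≤ ((range N).filter fun y => Int.fract (f y) < 1 / d).card + 1 := by
    exact_mod_cast h4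
  have hNle : (N : ℝ) ≤ X / d := by
    calc (N : ℝ) ≤ (⌊X⌋₊ : ℝ) / d := Nat.cast_div_le
      _ ≤ X / d := by gcongr; exact Nat.floor_le (by linarith)
  have hNge : X / d - 2 ≤ (N : ℝ) := by
    have k1 : ⌊X⌋₊ < (N + 1) * d := by
      rw [hNd]; exact (Nat.div_lt_iff_lt_mul hd).1 (Nat.lt_succ_self _)
    have k2 : X < (N + 1) * d := by
      have k3 := Nat.lt_floor_add_one X
      have k4 : (⌊X⌋₊ : ℝ) + 1 ≤ (N + 1) * d := by exact_mod_cast k1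
      linarith
    rw [sub_le_iff_le_add, div_le_iff₀ (by linarith)]
    nlinarith
  have h5 : 10 * (N : ℝ) / G ≤ 10 * X / (d * G) := by
    calc 10 * (N : ℝ) / G ≤ 10 * (X / d) / G := by gcongr
      _ = _ := by field_simp
  have h6 : 1 / (d : ℝ) * N ≤ X / d ^ 2 := by
    calc 1 / (d : ℝ) * N ≤ 1 / d * (X / d) := by gcongr
      _ = _ := by field_simp
  have h7 : X / d ^ 2 - 2 ≤ 1 / (d : ℝ) * N := by
    have : 1 / (d : ℝ) * (X / d - 2) ≤ 1 / d * N := by gcongr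
    have e : 1 / (d : ℝ) * (X / d - 2) = X / d ^ 2 - 2 * (1 / d) := by field_simp
    have : 1 / (d : ℝ) ≤ 1 := by rw [div_le_one (by linarith)]; exact hd0
    linarith
  rw [abs_le] at h1 ⊢
  constructor <;> linarith [h1.1, h1.2]

/-- the gcd function -/
noncomputable def gg (P : Polynomial ℝ) (x : ℕ) : ℕ := Int.gcd (x : ℤ) ⌊P.eval (x : ℝ)⌋

lemma dvd_gg (P : Polynomial ℝ) (x d : ℕ) :
    d ∣ gg P x ↔ (d : ℤ) ∣ (x : ℤ) ∧ (d : ℤ) ∣ ⌊P.eval (x : ℝ)⌋ := by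
  unfold gg
  rw [← Int.natCast_dvd_natCast, Int.dvd_coe_gcd_iff]

lemma gg_pos (P : Polynomial ℝ) (x : ℕ) (hx : 1 ≤ x) : 0 < gg P x := by
  unfold gg
  rw [Int.gcd_pos_iff]
  left; exact_mod_cast (by omega : x ≠ 0)

lemma mem_AP (P : Polynomial ℝ) (d x : ℕ) (X : ℝ) :
    x ∈ AP P d X ↔ (1 ≤ x ∧ x ≤ ⌊X⌋₊) ∧ d ∣ gg P x := by
  unfold AP
  rw [mem_filter, mem_Icc, dvd_gg]

/-- sifted set -/
noncomputable def SQ (P : Polynomial ℝ) (X : ℝ) (Q : ℕ) : Finset ℕ :=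
  (Icc 1 ⌊X⌋₊).filter fun x => Nat.gcd (gg P x) Q = 1

lemma moebius_sum (n : ℕ) (hn : n ≠ 0) :
    ∑ d ∈ n.divisors, (ArithmeticFunction.moebius d : ℝ) = if n = 1 then 1 else 0 := by
  have h := DFunLike.congr_fun ArithmeticFunction.moebius_mul_coe_zeta n
  rw [ArithmeticFunction.coe_mul_zeta_apply, ArithmeticFunction.one_apply] at h
  have h2 : ((∑ d ∈ n.divisors, ArithmeticFunction.moebius d : ℤ) : ℝ) = ((if n = 1 then 1 else 0 : ℤ) : ℝ) := by
    rw [h]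
  push_cast at h2
  exact h2

lemma SQ_card (P : Polynomial ℝ) (X : ℝ) (Q : ℕ) (hQ : Q ≠ 0) :
    ((SQ P X Q).card : ℝ) = ∑ d ∈ Q.divisors, (ArithmeticFunction.moebius d : ℝ) * (AP P d X).card := by
  classical
  have h1 : ((SQ P X Q).card : ℝ) = ∑ x ∈ Icc 1 ⌊X⌋₊, if Nat.gcd (gg P x) Q = 1 then (1 : ℝ) else 0 := by
    unfold SQ
    rw [card_filter]; push_cast; rfl
  have h2 : ∀ x : ℕ, (if Nat.gcd (gg P x) Q = 1 then (1 : ℝ) else 0) =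
      ∑ d ∈ Q.divisors, if d ∣ gg P x then (ArithmeticFunction.moebius d : ℝ) else 0 := by
    intro x
    rw [← moebius_sum _ (Nat.gcd_ne_zero_right hQ), ← sum_filter]
    refine sum_congr ?_ fun _ _ => rfl
    ext d
    rw [mem_filter, Nat.mem_divisors, Nat.mem_divisors, Nat.dvd_gcd_iff]
    have := Nat.gcd_ne_zero_right (m := gg P x) hQ
    tauto
  rw [h1]
  simp_rw [h2]
  rw [sum_comm]
  refine sum_congr rfl fun d _ => ?_
  rw [← sum_filter, sum_const, nsmul_eq_mul, mul_comm]
  congr 3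
  ext x
  rw [mem_filter, mem_AP, mem_Icc]

lemma S_eq (P : Polynomial ℝ) (X : ℝ) :
    S P X = ((Icc 1 ⌊X⌋₊).filter fun x => gg P x = 1).card := by
  classical
  unfold S
  symm
  refine card_bij (fun (x : ℕ) _ => (x : ℤ)) ?_ ?_ ?_
  · intro x hx
    rw [mem_filter] at hx ⊢
    refine ⟨?_, ?_⟩
    · simp only [Finset.bind_def, Finset.pure_def, Finset.mem_sup, Finset.mem_singleton]
      exact ⟨x, hx.1, rfl⟩
    · have := hx.2
      unfold gg at this
      push_cast
      exact this
  · intro a _ b _ hab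
    exact_mod_cast hab
  · intro x hx
    rw [mem_filter] at hx
    obtain ⟨h1, h2⟩ := hx
    simp only [Finset.bind_def, Finset.pure_def, Finset.mem_sup, Finset.mem_singleton] at h1
    obtain ⟨y, hy, rfl⟩ := h1
    refine ⟨y, ?_, rfl⟩
    rw [mem_filter]
    refine ⟨hy, ?_⟩
    unfold gg
    push_cast at h2
    exact h2

lemma moebius_tendsto :
    Filter.Tendsto (fun M => ∑ d ∈ range M, (ArithmeticFunction.moebius d : ℝ) / (d : ℝ) ^ 2)
      Filter.atTop (nhds (1 / (π ^ 2 / 6))) := by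
  have hs : 1 < (2 : ℂ).re := by norm_num
  have h1 := ArithmeticFunction.LSeries_zeta_mul_Lseries_moebius hs
  have h2 := (ArithmeticFunction.LSeriesSummable_moebius_iff (s := 2)).2 hs
  have h3 : LSeries (fun n => ((ArithmeticFunction.zeta n : ℕ) : ℂ)) 2 = (π : ℂ) ^ 2 / 6 := by
    have := ArithmeticFunction.LSeries_zeta_eq_riemannZeta hs
    rw [← riemannZeta_two, ← this]
  have h4 : LSeries (fun n => ((ArithmeticFunction.moebius n : ℤ) : ℂ)) 2 = 1 / ((π : ℂ) ^ 2 / 6) := by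
    rw [h3] at h1
    rw [eq_div_iff]
    · rw [mul_comm]; exact h1
    · intro h; rw [h] at h1; simp at h1
  have h5 : HasSum (fun n => LSeries.term (fun n => ((ArithmeticFunction.moebius n : ℤ) : ℂ)) 2 n) (1 / ((π : ℂ) ^ 2 / 6)) := by
    rw [← h4]; exact h2.hasSum
  have h6 := h5.tendsto_sum_nat
  have h7 : ∀ M : ℕ, (∑ i ∈ range M, LSeries.term (fun n => ((ArithmeticFunction.moebius n : ℤ) : ℂ)) 2 i) =
      ((∑ d ∈ range M, (ArithmeticFunction.moebius d : ℝ) / (d : ℝ) ^ 2 : ℝ) : ℂ) := by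
    intro M
    push_cast
    refine sum_congr rfl fun d _ => ?_
    rw [LSeries.term_def]
    split_ifs with h
    · simp [h]
    · norm_cast
  simp_rw [h7] at h6
  have h8 : (1 / ((π : ℂ) ^ 2 / 6)) = ((1 / (π ^ 2 / 6) : ℝ) : ℂ) := by push_cast; rfl
  rw [h8] at h6
  exact (Filter.tendsto_ofReal_iff).1 h6

lemma sqf_dvd_primorial (z d : ℕ) (hd : Squarefree d) (hz : d ≤ z) : d ∣ primorial z := by
  have hd0 : d ≠ 0 := hd.ne_zero
  rw [← Nat.prod_primeFactors_of_squarefree hd]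
  unfold primorial
  apply prod_dvd_prod_of_subset
  intro p hp
  rw [mem_filter, mem_range]
  have := Nat.le_of_mem_primeFactors hp
  exact ⟨by omega, Nat.prime_of_mem_primeFactors hp⟩

lemma moebius_partial (z : ℕ) :
    |∑ d ∈ (primorial z).divisors, (ArithmeticFunction.moebius d : ℝ) / (d : ℝ) ^ 2 - 1 / (π ^ 2 / 6)|
      ≤ 2 / ((z : ℝ) + 1) := by
  have h1 := (moebius_tendsto.const_sub
    (∑ d ∈ (primorial z).divisors, (ArithmeticFunction.moebius d : ℝ) / (d : ℝ) ^ 2)).abs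
  refine le_of_tendsto h1 ?_
  filter_upwards [Filter.eventually_gt_atTop (primorial z)] with M hM
  have hsub : (primorial z).divisors ⊆ range M := by
    intro d hd
    rw [mem_range]
    exact lt_of_le_of_lt (Nat.divisor_le hd) hM
  rw [abs_sub_comm, ← sum_sdiff hsub, add_sub_cancel_right]
  refine (abs_sum_le_sum_abs _ _).trans ?_
  refine le_trans ?_ (sum_Ioo_inv_sq_le (α := ℝ) z M)
  calc _ ≤ ∑ d ∈ range M \ (primorial z).divisors, if d ∈ Ioo z M then (((d:ℝ) ^ 2)⁻¹) else 0 := by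
        refine sum_le_sum fun d hd => ?_
        rw [mem_sdiff, mem_range] at hd
        split_ifs with h
        · rw [abs_div, abs_of_nonneg (show (0:ℝ) ≤ (d:ℝ)^2 by positivity), ← one_div]
          gcongr
          exact_mod_cast ArithmeticFunction.abs_moebius_le_one
        · rw [mem_Ioo] at h
          have hdz : d ≤ z := by omega
          by_cases hsq : Squarefree d
          · exact absurd (Nat.mem_divisors.2 ⟨sqf_dvd_primorial z d hsq hdz, (primorial_pos z).ne'⟩) hd.2
          · rw [ArithmeticFunction.moebius_eq_zero_of_not_squarefree hsq]; simp
    _ ≤ _ := by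
        rw [← sum_filter]
        refine sum_le_sum_of_subset_of_nonneg ?_ fun _ _ _ => by positivity
        intro d hd
        exact (mem_filter.1 hd).2

lemma pi_bound (t u : ℝ) (hu : 0 < u) (ht : u / 2 ≤ log t) (ht1 : 1 < t) :
    (Nat.primeCounting ⌊t⌋₊ : ℝ) ≤ 10 * t / u := by
  have h := Chebyshev.pi_le_log4_mul_div ht1
  have hs : log (√t) = log t / 2 := Real.log_sqrt (by linarith)
  have hsp : 0 < √t := Real.sqrt_pos.2 (by linarith)
  have hss : √t * √t = t := Real.mul_self_sqrt (by linarith)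
  have h1 : log (√t) ≤ √t := (Real.log_le_sub_one_of_pos hsp).trans (by linarith)
  have h4 : log 4 ≤ 3 / 2 := by
    have : (4 : ℝ) = 2 ^ 2 := by norm_num
    rw [this, Real.log_pow]
    have := Real.log_two_lt_d9
    push_cast; linarith
  have h5 : u / 4 ≤ log √t := by rw [hs]; linarith
  have h6 : log 4 * t / log √t ≤ 6 * t / u := by
    calc log 4 * t / log √t ≤ (3 / 2) * t / (u / 4) := by gcongr
      _ = 6 * t / u := by field_simp; ring
  have h7 : √t ≤ 4 * t / u := by
    rw [le_div_iff₀ hu]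
    nlinarith
  calc (Nat.primeCounting ⌊t⌋₊ : ℝ) ≤ _ := h
    _ ≤ 6 * t / u + 4 * t / u := add_le_add h6 h7
    _ = _ := by ring

lemma harm_le (n : ℕ) : ∑ y ∈ Icc 1 n, 1 / (y : ℝ) ≤ 1 + log n := by
  have := harmonic_le_one_add_log n
  rw [harmonic_eq_sum_Icc] at this
  push_cast at this
  simpa using this

open Classical in
/-- large primes -/
lemma large (X u : ℝ) (V : ℕ) (hV : 1 ≤ V) (hu : u = log X) (hu1 : 0 < u) (hVX : (V : ℝ) ^ 2 ≤ X) :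
    (((Icc 1 ⌊X⌋₊).filter fun x => ∃ p, p.Prime ∧ ⌊X⌋₊ / V < p ∧ p ∣ x).card : ℝ) ≤
      10 * X / u * (1 + log V) := by
  have hV0 : (1 : ℝ) ≤ V := by exact_mod_cast hV
  have hX0 : 1 ≤ X := by nlinarith
  have h1 : ((Icc 1 ⌊X⌋₊).filter fun x => ∃ p, p.Prime ∧ ⌊X⌋₊ / V < p ∧ p ∣ x) ⊆
      (Icc 1 V).biUnion fun y => (((range (⌊X⌋₊ / y + 1)).filter Nat.Prime).image fun p => p * y) := by
    intro x hx
    rw [mem_filter, mem_Icc] at hx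
    obtain ⟨⟨hx1, hx2⟩, p, hp, hp1, y, rfl⟩ := hx
    have hy0 : 0 < y := Nat.pos_of_mul_pos_left hx1
    rw [mem_biUnion]
    refine ⟨y, ?_, ?_⟩
    · rw [mem_Icc]
      refine ⟨hy0, ?_⟩
      by_contra hc
      rw [not_le] at hc
      rw [Nat.div_lt_iff_lt_mul hV] at hp1
      have : p * V ≤ p * y := Nat.mul_le_mul_left _ hc.le
      omega
    · rw [mem_image]
      refine ⟨p, ?_, rfl⟩
      rw [mem_filter, mem_range, Nat.lt_succ_iff, Nat.le_div_iff_mul_le hy0]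
      exact ⟨hx2, hp⟩
  have h2 := (card_le_card h1).trans card_biUnion_le
  have h3 : (∑ y ∈ Icc 1 V, (((((range (⌊X⌋₊ / y + 1)).filter Nat.Prime).image fun p => p * y)).card : ℝ)) ≤
      ∑ y ∈ Icc 1 V, 10 * X / u * (1 / (y : ℝ)) := by
    refine sum_le_sum fun y hy => ?_
    rw [mem_Icc] at hy
    have hy0 : (1 : ℝ) ≤ y := by exact_mod_cast hy.1
    have hyV : (y : ℝ) ≤ V := by exact_mod_cast hy.2
    have k1 : ((((range (⌊X⌋₊ / y + 1)).filter Nat.Prime).image fun p => p * y)).card ≤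
        Nat.primeCounting ⌊X / y⌋₊ := by
      rw [Nat.floor_div_natCast]
      refine card_image_le.trans ?_
      rw [Nat.primeCounting, Nat.primeCounting', Nat.count_eq_card_filter_range]
    have hsq : √X ≤ X / y := by
      rw [le_div_iff₀ (by linarith)]
      have : (y : ℝ) ≤ √X := Real.le_sqrt_of_sq_le (by nlinarith)
      nlinarith [Real.mul_self_sqrt (show 0 ≤ X by linarith), Real.sqrt_nonneg X]
    have hsX : 1 < √X := by
      rw [Real.lt_sqrt (by norm_num)]
      have : 1 < X := by
        by_contra hc
        have : X = 1 := by linarith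
        rw [this] at hu
        simp at hu; linarith
      linarith
    have k2 := pi_bound (X / y) u hu1 (by
      have : log (√X) = log X / 2 := Real.log_sqrt (by linarith)
      rw [hu, ← this]
      exact Real.log_le_log (by linarith) hsq) (by linarith)
    calc _ ≤ (Nat.primeCounting ⌊X / y⌋₊ : ℝ) := by exact_mod_cast k1
      _ ≤ _ := k2
      _ = _ := by ring
  calc _ ≤ (∑ y ∈ Icc 1 V, (((((range (⌊X⌋₊ / y + 1)).filter Nat.Prime).image fun p => p * y)).card : ℝ)) := by
        exact_mod_cast h2
    _ ≤ _ := h3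
    _ = 10 * X / u * ∑ y ∈ Icc 1 V, 1 / (y : ℝ) := by rw [mul_sum]
    _ ≤ _ := by
      gcongr
      exact harm_le V

open Classical in
/-- combinatorial sandwich -/
lemma sandwich (P : Polynomial ℝ) (X : ℝ) (z Y : ℕ) :
    S P X ≤ (SQ P X (primorial z)).card ∧
    (SQ P X (primorial z)).card ≤ S P X + (∑ p ∈ Ioo z (Y + 1), (AP P p X).card +
      ((Icc 1 ⌊X⌋₊).filter fun x => ∃ p, p.Prime ∧ Y < p ∧ p ∣ x).card) := by
  rw [S_eq]
  constructor
  · apply card_le_card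
    intro x hx
    unfold SQ
    rw [mem_filter] at hx ⊢
    refine ⟨hx.1, ?_⟩
    rw [hx.2]; simp
  · refine le_trans (card_le_card (t := ((Icc 1 ⌊X⌋₊).filter fun x => gg P x = 1) ∪
      (((Ioo z (Y + 1)).biUnion fun p => AP P p X) ∪
        ((Icc 1 ⌊X⌋₊).filter fun x => ∃ p, p.Prime ∧ Y < p ∧ p ∣ x))) ?_) ?_
    · intro x hx
      unfold SQ at hx
      rw [mem_filter] at hx
      rw [mem_union, mem_union, mem_filter, mem_filter, mem_biUnion]
      by_cases h1 : gg P x = 1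
      · left; exact ⟨hx.1, h1⟩
      right
      obtain ⟨p, hp, hpg⟩ := Nat.exists_prime_and_dvd h1
      have hpz : z < p := by
        by_contra hc
        have hpQ : p ∣ primorial z := by
          exact sqf_dvd_primorial z p hp.squarefree (by omega)
        have := Nat.dvd_gcd hpg hpQ
        rw [hx.2] at this
        exact hp.one_lt.ne' (Nat.dvd_one.1 this)
      by_cases h2 : p ≤ Y
      · left
        refine ⟨p, mem_Ioo.2 ⟨hpz, by omega⟩, ?_⟩
        rw [mem_AP]
        exact ⟨mem_Icc.1 hx.1, hpg⟩
      · right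
        refine ⟨hx.1, p, hp, by omega, ?_⟩
        exact Int.natCast_dvd_natCast.1 ((dvd_gg P x p).1 hpg).1
    · refine (card_union_le _ _).trans ?_
      gcongr
      refine (card_union_le _ _).trans ?_
      gcongr
      exact card_biUnion_le

lemma sieve_err (P : Polynomial ℝ) (X : ℝ) (hX : 1 ≤ X) (G z : ℕ) (hG : 2 ≤ G)
    (h : ∀ d : ℕ, d ∈ (primorial z).divisors →
      |((AP P d X).card : ℝ) - X / (d : ℝ) ^ 2| ≤ 10 * X / (d * G) + 3) :
    |((SQ P X (primorial z)).card : ℝ) - X / (π ^ 2 / 6)| ≤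
      primorial z * (10 * X / G + 3) + X * (2 / ((z : ℝ) + 1)) := by
  have hG0 : (2 : ℝ) ≤ G := by exact_mod_cast hG
  rw [SQ_card P X _ (primorial_pos z).ne']
  have h1 := moebius_partial z
  set M := ∑ d ∈ (primorial z).divisors, (ArithmeticFunction.moebius d : ℝ) / (d : ℝ) ^ 2 with hM
  have h2 : |∑ d ∈ (primorial z).divisors, (ArithmeticFunction.moebius d : ℝ) * (AP P d X).card - X * M| ≤
      primorial z * (10 * X / G + 3) := by
    rw [hM, mul_sum, ← sum_sub_distrib]
    refine (abs_sum_le_sum_abs _ _).trans ?_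
    calc _ ≤ ∑ d ∈ (primorial z).divisors, (10 * X / G + 3) := by
          refine sum_le_sum fun d hd => ?_
          have hd1 : (1 : ℝ) ≤ d := by
            exact_mod_cast Nat.pos_of_mem_divisors hd
          have e : (ArithmeticFunction.moebius d : ℝ) * (AP P d X).card -
              X * ((ArithmeticFunction.moebius d : ℝ) / (d : ℝ) ^ 2) =
              (ArithmeticFunction.moebius d : ℝ) * ((AP P d X).card - X / (d : ℝ) ^ 2) := by ring
          rw [e, abs_mul]
          have hm : |(ArithmeticFunction.moebius d : ℝ)| ≤ 1 := by
            exact_mod_cast ArithmeticFunction.abs_moebius_le_one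
          have h3 := h d hd
          have h4 : 10 * X / (d * G) ≤ 10 * X / G := by
            apply div_le_div_of_nonneg_left (by linarith) (by linarith)
            nlinarith
          calc _ ≤ 1 * |((AP P d X).card : ℝ) - X / (d : ℝ) ^ 2| := by gcongr
            _ ≤ _ := by linarith
      _ = ((primorial z).divisors.card : ℝ) * (10 * X / G + 3) := by
          rw [sum_const, nsmul_eq_mul]
      _ ≤ _ := by
          have : ((primorial z).divisors.card : ℝ) ≤ primorial z := by
            exact_mod_cast Nat.card_divisors_le_self _
          have : 0 ≤ 10 * X / G + 3 := by positivity
          gcongr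
  have h3 : |X * M - X / (π ^ 2 / 6)| ≤ X * (2 / ((z : ℝ) + 1)) := by
    have e : X * M - X / (π ^ 2 / 6) = X * (M - 1 / (π ^ 2 / 6)) := by ring
    rw [e, abs_mul, abs_of_nonneg (show 0 ≤ X by linarith)]
    gcongr
  have := abs_sub_le (∑ d ∈ (primorial z).divisors, (ArithmeticFunction.moebius d : ℝ) * (AP P d X).card)
    (X * M) (X / (π ^ 2 / 6))
  linarith

lemma medium (P : Polynomial ℝ) (X : ℝ) (hX : 1 ≤ X) (G z Y : ℕ) (hG : 2 ≤ G) (hY : (Y : ℝ) ≤ X)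
    (h : ∀ d : ℕ, 1 ≤ d → d ≤ Y →
      |((AP P d X).card : ℝ) - X / (d : ℝ) ^ 2| ≤ 10 * X / (d * G) + 3) :
    ((∑ p ∈ Ioo z (Y + 1), (AP P p X).card : ℕ) : ℝ) ≤
      X * (2 / ((z : ℝ) + 1)) + 10 * X / G * (1 + log X) + 3 * Y := by
  have hG0 : (2 : ℝ) ≤ G := by exact_mod_cast hG
  push_cast
  have hsub : Ioo z (Y + 1) ⊆ Icc 1 Y := by
    intro d hd; rw [mem_Ioo] at hd; rw [mem_Icc]; omega
  have h1 : ∑ p ∈ Ioo z (Y + 1), ((AP P p X).card : ℝ) ≤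
      ∑ d ∈ Ioo z (Y + 1), (X * (((d : ℝ) ^ 2)⁻¹) + (10 * X / G * (1 / d) + 3)) := by
    refine sum_le_sum fun d hd => ?_
    have hd' := mem_Icc.1 (hsub hd)
    have := (abs_le.1 (h d hd'.1 hd'.2)).2
    have e : 10 * X / (d * G) = 10 * X / G * (1 / d) := by ring
    rw [e] at this
    rw [← div_eq_mul_inv]
    linarith
  refine h1.trans ?_
  rw [sum_add_distrib, ← mul_sum]
  have h2 : X * ∑ d ∈ Ioo z (Y + 1), (((d : ℝ) ^ 2)⁻¹) ≤ X * (2 / ((z : ℝ) + 1)) := by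
    gcongr
    exact sum_Ioo_inv_sq_le z (Y + 1)
  have h3 : ∑ d ∈ Ioo z (Y + 1), (10 * X / G * (1 / (d : ℝ)) + 3) ≤
      ∑ d ∈ Icc 1 Y, (10 * X / G * (1 / (d : ℝ)) + 3) :=
    sum_le_sum_of_subset_of_nonneg hsub fun _ _ _ => by positivity
  rw [sum_add_distrib (s := Icc 1 Y), ← mul_sum, sum_const, Nat.card_Icc, nsmul_eq_mul] at h3
  have h4 : ∑ y ∈ Icc 1 Y, 1 / (y : ℝ) ≤ 1 + log X := by
    refine (harm_le Y).trans ?_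
    rcases Nat.eq_zero_or_pos Y with h0 | h0
    · rw [h0]; simp [Real.log_nonneg hX]
    · have : (0 : ℝ) < Y := by exact_mod_cast h0
      gcongr
  have h5 : 10 * X / G * ∑ y ∈ Icc 1 Y, 1 / (y : ℝ) ≤ 10 * X / G * (1 + log X) := by gcongr
  simp only [Nat.add_sub_cancel] at h3
  linarith

lemma core (P : Polynomial ℝ) (B : ℕ) (hB1 : 1 ≤ B)
    (hB : ∀ G : ℕ, 2 ≤ G → ∀ X : ℝ, 1 ≤ X → ∀ d : ℕ, 1 ≤ d → G ^ B ≤ ⌊X⌋₊ / d →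
      |((AP P d X).card : ℝ) - X / (d : ℝ) ^ 2| ≤ 10 * X / (d * G) + 3)
    (X u l : ℝ) (hX1 : 1 ≤ X) (hu : u = log X) (hl : l = log u) (hl1 : 1 ≤ l) (hlu : l ^ 2 ≤ u)
    (hX : (2 * u) ^ (6 * B + 3) ≤ X) :
    |(S P X : ℝ) - X / (π ^ 2 / 6)| ≤ (50 + 60 * B) * (X / l) := by
  have hX0 : 0 < X := by linarith
  have hu0 : 0 < u := by nlinarith
  have hexp : exp l = u := by rw [hl, Real.exp_log hu0]
  have hu2 : 2 ≤ u := by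
    have := Real.add_one_le_exp l
    linarith
  have hlu' : l ≤ u := by nlinarith
  set U := ⌈u⌉₊ with hU
  have hU1 : u ≤ U := Nat.le_ceil u
  have hU2 : (U : ℝ) ≤ 2 * u := by
    have := Nat.ceil_lt_add_one hu0.le
    linarith
  have hU3 : 2 ≤ U := by
    have : (2 : ℝ) ≤ U := by linarith
    exact_mod_cast this
  set G := U ^ 3 with hG
  have hG2 : 2 ≤ G := by
    rw [hG]; exact hU3.trans (Nat.le_self_pow (by norm_num) U)
  have hGu : u ^ 3 ≤ (G : ℝ) := by
    rw [hG]; push_cast; gcongr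
  set V := G ^ B with hV
  have hGV : G ≤ V := Nat.le_self_pow (by omega) G
  have hV1 : 1 ≤ V := by omega
  have hVU : (V : ℝ) = (U : ℝ) ^ (3 * B) := by
    rw [hV, hG]; push_cast; rw [← pow_mul]
  have h1u : 1 ≤ 2 * u := by linarith
  have hV2 : (V : ℝ) ^ 2 ≤ X := by
    rw [hVU, ← pow_mul]
    calc (U : ℝ) ^ (3 * B * 2) ≤ (2 * u) ^ (3 * B * 2) := by gcongr
      _ ≤ (2 * u) ^ (6 * B + 3) := pow_le_pow_right₀ h1u (by omega)
      _ ≤ X := hX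
  have huX : u ^ 3 ≤ X := by
    calc u ^ 3 ≤ (2 * u) ^ 3 := by gcongr; linarith
      _ ≤ (2 * u) ^ (6 * B + 3) := pow_le_pow_right₀ h1u (by omega)
      _ ≤ X := hX
  have hlogV : log V ≤ 6 * B * l := by
    rw [hVU, Real.log_pow]
    have k : log U ≤ 2 * l := by
      calc log U ≤ log (2 * u) := Real.log_le_log (by linarith) hU2
        _ = log 2 + l := by rw [Real.log_mul (by norm_num) hu0.ne', hl]
        _ ≤ 2 * l := by linarith [Real.log_two_lt_d9]
    push_cast
    calc 3 * (B : ℝ) * log U ≤ 3 * B * (2 * l) := by gcongr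
      _ = _ := by ring
  set z := ⌊l⌋₊ with hz
  have hzl : (z : ℝ) ≤ l := Nat.floor_le (by linarith)
  have hzl2 : l ≤ (z : ℝ) + 1 := (Nat.lt_floor_add_one l).le
  have hQ : (primorial z : ℝ) ≤ u ^ 2 := by
    have h4 : (4 : ℝ) ≤ exp 2 := by
      have : exp 2 = exp 1 * exp 1 := by rw [← Real.exp_add]; norm_num
      rw [this]
      nlinarith [Real.exp_one_gt_d9]
    calc (primorial z : ℝ) ≤ (4 : ℝ) ^ z := by exact_mod_cast primorial_le_four_pow z
      _ ≤ (exp 2) ^ z := by gcongr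
      _ = exp (z * 2) := by rw [← Real.exp_nat_mul]
      _ ≤ exp (l * 2) := by gcongr
      _ = u ^ 2 := by rw [mul_two, Real.exp_add, hexp]; ring
  have hVQ : primorial z * V ≤ ⌊X⌋₊ := by
    apply Nat.le_floor
    push_cast
    calc (primorial z : ℝ) * V ≤ (2 * u) ^ 2 * (2 * u) ^ (3 * B) := by
          rw [hVU]; gcongr
          exact hQ.trans (by gcongr; linarith)
      _ = (2 * u) ^ (2 + 3 * B) := by rw [← pow_add]
      _ ≤ (2 * u) ^ (6 * B + 3) := pow_le_pow_right₀ h1u (by omega)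
      _ ≤ X := hX
  set Y := ⌊X⌋₊ / V with hY
  have hQY : primorial z ≤ Y := by rw [hY, Nat.le_div_iff_mul_le hV1]; exact hVQ
  have hYX : (Y : ℝ) ≤ X / V := by
    calc (Y : ℝ) ≤ (⌊X⌋₊ : ℝ) / V := Nat.cast_div_le
      _ ≤ X / V := by gcongr; exact Nat.floor_le hX0.le
  have hVr : u ≤ (V : ℝ) := by
    have : (G : ℝ) ≤ V := by exact_mod_cast hGV
    nlinarith [sq_nonneg u]
  have hYX2 : (Y : ℝ) ≤ X / u := hYX.trans (by gcongr)
  have hA : ∀ d : ℕ, 1 ≤ d → d ≤ Y →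
      |((AP P d X).card : ℝ) - X / (d : ℝ) ^ 2| ≤ 10 * X / (d * G) + 3 := by
    intro d hd hdY
    refine hB G hG2 X hX1 d hd ?_
    rw [Nat.le_div_iff_mul_le hd]
    rw [hY, Nat.le_div_iff_mul_le hV1, mul_comm] at hdY
    exact hdY
  have e1 := sieve_err P X hX1 G z hG2 (fun d hd => hA d (Nat.pos_of_mem_divisors hd)
    ((Nat.divisor_le hd).trans hQY))
  have e2 := medium P X hX1 G z Y hG2 (hYX2.trans (div_le_self hX0.le (by linarith))) hA
  have e3 := large X u V hV1 hu hu0 hV2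
  obtain ⟨s1, s2⟩ := sandwich P X z Y
  rw [← hY] at e3
  have s1' : (S P X : ℝ) ≤ (SQ P X (primorial z)).card := by exact_mod_cast s1
  have s2' : ((SQ P X (primorial z)).card : ℝ) ≤ _ := Nat.cast_le.2 s2
  rw [Nat.cast_add, Nat.cast_add] at s2'
  have hT : X / u ≤ X / l := by gcongr
  have hT2 : X * l / u ≤ X / l := by
    rw [div_le_div_iff₀ hu0 (by linarith)]
    nlinarith
  have t1 : X * (2 / ((z : ℝ) + 1)) ≤ 2 * (X / l) := by
    calc X * (2 / ((z : ℝ) + 1)) ≤ X * (2 / l) := by gcongr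
      _ = _ := by ring
  have t2 : (primorial z : ℝ) * (10 * X / G + 3) ≤ 13 * (X / u) := by
    have k : 10 * X / G ≤ 10 * X / u ^ 3 := by gcongr
    calc (primorial z : ℝ) * (10 * X / G + 3) ≤ u ^ 2 * (10 * X / u ^ 3 + 3) := by gcongr
      _ = 10 * (X / u) + 3 * (u ^ 3 / u) := by field_simp
      _ ≤ 10 * (X / u) + 3 * (X / u) := by gcongr
      _ = _ := by ring
  have t3 : 10 * X / G * (1 + log X) ≤ 20 * (X / u) := by
    rw [← hu]
    calc 10 * X / G * (1 + u) ≤ 10 * X / u ^ 3 * (2 * u) := by gcongr; linarith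
      _ = 20 * (X / u) / u := by field_simp; ring
      _ ≤ 20 * (X / u) := div_le_self (by positivity) (by linarith)
  have t4 : 10 * X / u * (1 + log V) ≤ 10 * (X / l) + 60 * B * (X / l) := by
    calc 10 * X / u * (1 + log V) ≤ 10 * X / u * (1 + 6 * B * l) := by gcongr
      _ = 10 * (X / u) + 60 * B * (X * l / u) := by ring
      _ ≤ _ := by gcongr
  have hTp : 0 ≤ X / l := by positivity
  have hfin : (50 + 60 * (B : ℝ)) * (X / l) = 50 * (X / l) + 60 * B * (X / l) := by ring
  rw [hfin]
  rw [abs_le] at e1 ⊢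
  constructor <;> linarith [e1.1, e1.2]

/-- If the coefficient of `x` in `P` is non-Liouville, then
`|S(X) - X/ζ(2)| ≤ C·X/(log log X)^(1/3)` for all `X ≥ X₁`, where `ζ(2) = π²/6`. -/
theorem statement0 (P : Polynomial ℝ) (hP : ¬ IsLiouvilleReal (P.coeff 1)) :
    ∃ C > (0 : ℝ), ∃ X₁ > (0 : ℝ), ∀ X : ℝ, X ≥ X₁ →
      |(S P X : ℝ) - X / (π ^ 2 / 6)| ≤ C * X / (Real.log (Real.log X)) ^ ((1 : ℝ) / 3) := by
  obtain ⟨B, hB1, hB⟩ := Ad_bound P hP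
  have ll : Filter.Tendsto (fun X : ℝ => log (log X)) Filter.atTop Filter.atTop :=
    Real.tendsto_log_atTop.comp Real.tendsto_log_atTop
  have a1 : ∀ᶠ X : ℝ in Filter.atTop, 1 ≤ log (log X) := ll.eventually_ge_atTop 1
  have a2 : ∀ᶠ X : ℝ in Filter.atTop, log (log X) ^ 2 ≤ log X := by
    have h := (Real.isLittleO_pow_log_id_atTop (n := 2)).bound (show (0 : ℝ) < 1 by norm_num)
    have h2 := Real.tendsto_log_atTop.eventually (h.and (Filter.eventually_ge_atTop (0 : ℝ)))
    filter_upwards [h2] with X hX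
    have := hX.1
    simp only [id, Real.norm_eq_abs, one_mul] at this
    rw [abs_of_nonneg hX.2] at this
    exact (le_abs_self _).trans this
  have a3 : ∀ᶠ X : ℝ in Filter.atTop, (2 * log X) ^ (6 * B + 3) ≤ X := by
    have h := (Real.isLittleO_pow_log_id_atTop (n := 6 * B + 3)).bound
      (show (0 : ℝ) < (2 ^ (6 * B + 3))⁻¹ by positivity)
    filter_upwards [h, Filter.eventually_ge_atTop (0 : ℝ)] with X hX hX0
    simp only [id, Real.norm_eq_abs] at hX
    rw [abs_of_nonneg hX0, inv_mul_eq_div, le_div_iff₀ (by positivity)] at hX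
    rw [mul_pow, mul_comm]
    refine le_trans ?_ hX
    gcongr
    exact le_abs_self _
  obtain ⟨X₁, hX₁⟩ := Filter.eventually_atTop.1 (a1.and (a2.and a3))
  refine ⟨50 + 60 * B, by positivity, max X₁ 1, by positivity, ?_⟩
  intro X hX
  have hX1 : 1 ≤ X := (le_max_right _ _).trans hX
  obtain ⟨b1, b2, b3⟩ := hX₁ X ((le_max_left _ _).trans hX)
  have h := core P B hB1 hB X (log X) (log (log X)) hX1 rfl rfl b1 b2 b3
  refine h.trans ?_
  rw [mul_div_assoc]
  have : log (log X) ^ ((1 : ℝ) / 3) ≤ log (log X) := by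
    conv_rhs => rw [← Real.rpow_one (log (log X))]
    exact Real.rpow_le_rpow_of_exponent_le b1 (by norm_num)
  gcongr
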